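/- arXiv:2104.05141 — 2 statements merged into one kernel-verified Lean document; each statement's English description precedes it below -/
import Mathlib

section
/- Let Γ₁ and Γ₂ be finitely generated groups which are commensurable, i.e. there exist finite index subgroups H₁ ≤ Γ₁ and H₂ ≤ Γ₂ which are isomorphic. Then Γ₁ is self-simulable if and only if Γ₂ is self-simulable. -/
open scoped Pointwise

namespace SelfSim

/-- The left shift action of a group `G` on the full shift `G → A`:
`(g · x)(h) = x (g⁻¹ h)`. -/
def shift {G A : Type*} [Group G] (g : G) (x : G → A) : G → A := fun h => x (g⁻¹ * h)

/-- A `G`-subshift: a closed, shift-invariant subset of the full shift `G → A`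
(`A` carrying its topology, `G → A` the product topology). -/
def IsSubshift {G A : Type*} [Group G] [TopologicalSpace A] (X : Set (G → A)) : Prop :=
  IsClosed X ∧ ∀ (g : G) (x : G → A), x ∈ X → shift g x ∈ X

/-- A subshift of finite type: there are a finite set `F ⊆ G` and a set `𝓛` of patterns
on `F` such that `x ∈ X` iff every translate of `x` restricted to `F` lies in `𝓛`. -/
def IsSFT {G A : Type*} [Group G] (X : Set (G → A)) : Prop :=
  ∃ (F : Finset G) (L : Set (↥F → A)),
    ∀ x : G → A, x ∈ X ↔ ∀ g : G, (fun h : ↥F => x (g * (h : G))) ∈ L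

/-- `φ` is a topological factor map from the shift action on `Z ⊆ G → A` onto the
action `act` of `G` on `Y ⊆ β`: continuous on `Z`, mapping `Z` into and onto `Y`,
and equivariant. -/
def IsFactorMapOnto {G A β : Type*} [Group G] [TopologicalSpace A] [TopologicalSpace β]
    (Z : Set (G → A)) (φ : (G → A) → β) (act : G → β → β) (Y : Set β) : Prop :=
  ContinuousOn φ Z ∧ Set.MapsTo φ Z Y ∧ Set.SurjOn φ Z Y ∧
    ∀ (g : G) (x : G → A), x ∈ Z → φ (shift g x) = act g (φ x)

/-- A sofic subshift: a topological factor of some subshift of finite type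
(over some finite alphabet, which we may take to be `Fin k`). -/
def IsSofic {G A : Type*} [Group G] [TopologicalSpace A] (Y : Set (G → A)) : Prop :=
  ∃ (k : ℕ) (Z : Set (G → Fin k)) (φ : (G → Fin k) → (G → A)),
    IsSFT Z ∧ IsFactorMapOnto Z φ shift Y

/-- Recursively enumerable predicate. -/
def RE {α : Type*} [Primcodable α] (p : α → Prop) : Prop :=
  Partrec fun a => Part.assert (p a) fun _ => Part.some ()

/-- `x : ℕ → A` begins with the finite word `w`. -/
def ExtendsWord {A : Type*} (x : ℕ → A) (w : List A) : Prop :=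
  ∀ i : Fin w.length, x i = w.get i

/-- A closed subset `Z ⊆ A^ℕ` is effectively closed if the set of words whose
cylinder is disjoint from `Z` is recursively enumerable. -/
def EffectivelyClosedSet {A : Type*} [Primcodable A] [TopologicalSpace A]
    (Z : Set (ℕ → A)) : Prop :=
  IsClosed Z ∧ RE fun w : List A => ∀ x : ℕ → A, ExtendsWord x w → x ∉ Z

/-- `act` defines an action of `G` on the set `X ⊆ β`. -/
def IsActionOn {G β : Type*} [Group G] (act : G → β → β) (X : Set β) : Prop :=
  (∀ g : G, Set.MapsTo (act g) X X) ∧ (∀ x ∈ X, act 1 x = x) ∧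
    ∀ (g h : G) (x : β), x ∈ X → act (g * h) x = act g (act h x)

/-- The set representation of the action `act` of `G` on `X ⊆ A^ℕ` with respect to the
finite generating tuple `s : Fin m → G` (playing the role of the generating set `S`):
the set of `y ∈ (A^S)^ℕ` of the form `y(n)(s) = (s · x)(n)` for some `x ∈ X`. -/
def SetRep {G A : Type*} [Group G] {m : ℕ} (s : Fin m → G)
    (act : G → (ℕ → A) → ℕ → A) (X : Set (ℕ → A)) : Set (ℕ → (Fin m → A)) :=
  {y | ∃ x ∈ X, ∀ i : Fin m, (fun n => y n i) = act (s i) x}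

/-- The action `act` of `G` on the closed set `X ⊆ A^ℕ` is effectively closed with respect
to the finite generating tuple `s` (which contains `1` and generates `G` as a monoid):
its set representation is an effectively closed subset of `(A^S)^ℕ`. -/
def IsEffClosedActionWith {G A : Type*} [Group G] [Primcodable A] [TopologicalSpace A]
    {m : ℕ} (s : Fin m → G) (act : G → (ℕ → A) → ℕ → A) (X : Set (ℕ → A)) : Prop :=
  IsClosed X ∧ IsActionOn act X ∧ (∃ i, s i = 1) ∧
    Submonoid.closure (Set.range s) = ⊤ ∧
    EffectivelyClosedSet (SetRep s act X)

/-- The action `act` of `G` on `X ⊆ A^ℕ` is effectively closed (with respect to some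
finite generating set containing `1`). -/
def IsEffClosedAction {G A : Type*} [Group G] [Primcodable A] [TopologicalSpace A]
    (act : G → (ℕ → A) → ℕ → A) (X : Set (ℕ → A)) : Prop :=
  ∃ (m : ℕ) (s : Fin m → G), IsEffClosedActionWith s act X

/-- The action `act` of `G` on `X ⊆ A^ℕ` is a topological factor of some `G`-subshift
of finite type. -/
def IsFactorOfSFT {G A : Type*} [Group G] [TopologicalSpace A]
    (act : G → (ℕ → A) → ℕ → A) (X : Set (ℕ → A)) : Prop :=
  ∃ (k : ℕ) (Z : Set (G → Fin k)) (φ : (G → Fin k) → (ℕ → A)),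
    IsSFT Z ∧ IsFactorMapOnto Z φ act X

/-- A group `G` is (dynamically) self-simulable if every effectively closed action of `G`
on a closed subset of `{0,1}^ℕ` is a topological factor of a `G`-subshift of finite type. -/
def SelfSimulable (G : Type*) [Group G] : Prop :=
  ∀ (X : Set (ℕ → Bool)) (act : G → (ℕ → Bool) → ℕ → Bool),
    IsEffClosedAction act X → IsFactorOfSFT act X

/-- Amenability via the Følner condition: for every finite `K` and `δ > 0` there is a
nonempty finite `F` with `|KF △ F| ≤ δ |F|`. -/
def Amenable (G : Type*) [Group G] : Prop :=
  ∀ K : Set G, K.Finite → ∀ δ : ℝ, 0 < δ →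
    ∃ F : Set G, F.Finite ∧ F.Nonempty ∧
      ((symmDiff (K * F) F).ncard : ℝ) ≤ δ * F.ncard

/-- A finitely generated group is recursively presented: for some finite tuple generating
`G` as a monoid, the set of words evaluating to the identity is recursively enumerable. -/
def RecursivelyPresented (G : Type*) [Group G] : Prop :=
  ∃ (m : ℕ) (s : Fin m → G), Submonoid.closure (Set.range s) = ⊤ ∧
    RE fun w : List (Fin m) => (w.map s).prod = 1

/-- A finitely generated group has decidable word problem: for some finite tuple generating
`G` as a monoid, the set of words evaluating to the identity is decidable. -/
def DecidableWordProblem (G : Type*) [Group G] : Prop :=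
  ∃ (m : ℕ) (s : Fin m → G), Submonoid.closure (Set.range s) = ⊤ ∧
    ComputablePred fun w : List (Fin m) => (w.map s).prod = 1

/-- A pattern coding `c` (a finite list of pairs (word over the generators, letter))
holds in the configuration `x` at position `g`: `x (g ⬝ w̲) = a` for every pair `(w, a)`
of `c`. This says exactly that `x ∈ g·[c]`. -/
def PCHolds {G A : Type*} [Group G] {m : ℕ} (s : Fin m → G) (x : G → A) (g : G)
    (c : List (List (Fin m) × A)) : Prop :=
  ∀ p ∈ c, x (g * (p.1.map s).prod) = p.2

/-- A `G`-subshift `X ⊆ A^G` is effectively closed by patterns: for some finite generating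
tuple `s`, there is a recursively enumerable set `𝒞` of pattern codings such that `X` is the
set of configurations avoiding every translate of every cylinder `[c]`, `c ∈ 𝒞`. -/
def EffClosedByPatterns {G A : Type*} [Group G] [Primcodable A] (X : Set (G → A)) : Prop :=
  ∃ (m : ℕ) (s : Fin m → G), Submonoid.closure (Set.range s) = ⊤ ∧
    ∃ 𝒞 : Set (List (List (Fin m) × A)), RE (· ∈ 𝒞) ∧
      X = {x : G → A | ∀ (g : G) (c : List (List (Fin m) × A)), c ∈ 𝒞 → ¬ PCHolds s x g c}

/-- Word metric distance associated to a finite tuple `s` generating `G` as a monoid. -/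
noncomputable def wordDist {G : Type*} [Group G] {m : ℕ} (s : Fin m → G) (g h : G) : ℕ :=
  sInf {n : ℕ | ∃ w : List (Fin m), w.length = n ∧ (w.map s).prod = g⁻¹ * h}

/-- Two finitely generated groups are quasi-isometric (with respect to word metrics given
by some finite generating sets). -/
def QuasiIsometric (G₁ G₂ : Type*) [Group G₁] [Group G₂] : Prop :=
  ∃ (m₁ : ℕ) (s₁ : Fin m₁ → G₁) (m₂ : ℕ) (s₂ : Fin m₂ → G₂),
    Submonoid.closure (Set.range s₁) = ⊤ ∧ Submonoid.closure (Set.range s₂) = ⊤ ∧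
    ∃ (f : G₂ → G₁) (A B C : ℝ), 1 ≤ A ∧ 0 ≤ B ∧ 0 ≤ C ∧
      (∀ x y : G₂,
        (1 / A) * (wordDist s₂ x y : ℝ) - B ≤ (wordDist s₁ (f x) (f y) : ℝ) ∧
        (wordDist s₁ (f x) (f y) : ℝ) ≤ A * (wordDist s₂ x y : ℝ) + B) ∧
      ∀ z : G₁, ∃ x : G₂, (wordDist s₁ z (f x) : ℝ) ≤ C

/-- A finitely presented group: a quotient of a finitely generated free group by the
normal closure of finitely many relators. -/
def FinitelyPresentedGroup (G : Type*) [Group G] : Prop :=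
  ∃ (m : ℕ) (f : FreeGroup (Fin m) →* G) (R : Finset (FreeGroup (Fin m))),
    Function.Surjective f ∧ f.ker = Subgroup.normalClosure (R : Set (FreeGroup (Fin m)))

/-- A subgroup `Δ ≤ G` is mediated: there is a finite generating set `T` of `G` such that
`Δ ∩ tΔt⁻¹` is non-amenable for every `t ∈ T`. -/
def Mediated {G : Type*} [Group G] (Δ : Subgroup G) : Prop :=
  ∃ T : Finset G, Subgroup.closure (T : Set G) = ⊤ ∧
    ∀ t ∈ T, ¬ Amenable ↥(Δ ⊓ Subgroup.map (MulAut.conj t).toMonoidHom Δ)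

end SelfSim

namespace SelfSim

theorem RE_exists {α : Type*} [Primcodable α] {P : α → ℕ → Prop} (hP : PrimrecRel P) :
    RE fun a => ∃ n, P a n := by
  classical
  have h1 : Primrec₂ (fun a n => decide (P a n)) := PrimrecRel.decide hP
  have h2 : Partrec fun a => Nat.rfind fun n => (Part.some (decide (P a n)) : Part Bool) :=
    Partrec.rfind (Computable.partrec (Primrec.to_comp h1))
  have h3 := REPred.of_eq h2.dom_re (q := fun a => ∃ n, P a n) (by
    intro a
    refine Nat.rfind_dom.trans ?_
    simp)
  exact h3

theorem RE_normal {α : Type*} [Primcodable α] {p : α → Prop} (hp : RE p) :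
    ∃ E : α → ℕ → Prop, PrimrecRel E ∧ ∀ a, p a ↔ ∃ n, E a n := by
  obtain ⟨c, hc⟩ := Nat.Partrec.Code.exists_code.1 (show Nat.Partrec _ from hp)
  refine ⟨fun a n => (Nat.Partrec.Code.evaln n c (Encodable.encode a)).isSome = true, ?_, ?_⟩
  · have h := Nat.Partrec.Code.primrec_evaln.comp
      (Primrec.pair (Primrec.pair (Primrec.snd (α := α) (β := ℕ)) (Primrec.const c))
        (Primrec.encode.comp Primrec.fst))
    have h2 := Primrec.option_isSome.comp h
    exact ⟨inferInstance, by simpa using h2⟩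
  · intro a
    have h1 : p a ↔ (Nat.Partrec.Code.eval c (Encodable.encode a)).Dom := by
      rw [hc]; simp [Part.assert]
    rw [h1, Part.dom_iff_mem]
    constructor
    · rintro ⟨x, hx⟩
      obtain ⟨k, hk⟩ := Nat.Partrec.Code.evaln_complete.1 hx
      exact ⟨k, Option.isSome_iff_exists.2 ⟨x, hk⟩⟩
    · rintro ⟨n, hn⟩
      obtain ⟨x, hx⟩ := Option.isSome_iff_exists.1 hn
      exact ⟨x, Nat.Partrec.Code.evaln_sound hx⟩

theorem prim_forall_lt {β : Type*} [Primcodable β] {R : ℕ → β → Prop} (h : PrimrecRel R) :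
    PrimrecRel fun n b => ∀ x < n, R x b := by
  have h1 := h.forall_mem_list.comp
    (Primrec.list_range.comp (Primrec.fst (α := ℕ) (β := β))) Primrec.snd
  refine PrimrecPred.of_eq h1 ?_
  simp

/-- Prefix of length `n` of a sequence. -/
def pre {A : Type*} (x : ℕ → A) (n : ℕ) : List A := (List.range n).map x

/-- All words of length `n` over the letters in the list `bs`. -/
def allWords {B : Type*} (bs : List B) (n : ℕ) : List (List B) :=
  n.rec [[]] fun _ ws => ws.flatMap fun u => bs.map fun b => u ++ [b]

@[simp] theorem length_pre {A : Type*} (x : ℕ → A) (n : ℕ) : (pre x n).length = n := by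
  simp [pre]

theorem getElem?_pre {A : Type*} (x : ℕ → A) (n i : ℕ) :
    (pre x n)[i]? = if i < n then some (x i) else none := by
  by_cases h : i < n <;> simp [pre, h]

theorem take_pre {A : Type*} (x : ℕ → A) (n k : ℕ) (h : k ≤ n) :
    (pre x n).take k = pre x k := by
  apply List.ext_getElem?
  intro i
  rw [List.getElem?_take, getElem?_pre, getElem?_pre]
  grind

theorem pre_eq_iff {A : Type*} (x y : ℕ → A) (n : ℕ) :
    pre x n = pre y n ↔ ∀ i < n, x i = y i := by
  simp [pre]

theorem extendsWord_pre {A : Type*} (x y : ℕ → A) (n : ℕ) :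
    ExtendsWord y (pre x n) ↔ ∀ i < n, y i = x i := by
  constructor
  · intro h i hi
    simpa [pre] using h ⟨i, by simpa using hi⟩
  · intro h i
    rw [h i (by simpa using i.2)]
    simp only [List.get_eq_getElem]
    simp [pre]

theorem extendsWord_iff {A : Type*} (x : ℕ → A) (w : List A) :
    ExtendsWord x w ↔ ∀ i < w.length, w[i]? = some (x i) := by
  constructor
  · intro h i hi
    have := h ⟨i, hi⟩
    simp at this
    simp [this, hi]
  · intro h i
    have := h i i.2
    simp at this
    simp [this]

theorem mem_allWords {B : Type*} (bs : List B) (hbs : ∀ b, b ∈ bs) (n : ℕ) (u : List B) :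
    u ∈ allWords bs n ↔ u.length = n := by
  induction n generalizing u with
  | zero => simp [allWords]
  | succ n ih =>
    change u ∈ (allWords bs n).flatMap (fun u => bs.map fun b => u ++ [b]) ↔ _
    simp only [List.mem_flatMap, List.mem_map, ih]
    constructor
    · rintro ⟨v, hv, b, -, rfl⟩; simp [hv]
    · intro h
      have hne : u ≠ [] := by rintro rfl; simp at h
      refine ⟨u.dropLast, by simp [h], u.getLast hne, hbs _, List.dropLast_append_getLast hne⟩

theorem primrec_allWords {B : Type*} [Primcodable B] (bs : List B) :
    Primrec (allWords bs) := by
  refine Primrec.nat_rec₁ (f := fun _ ws => ws.flatMap fun u => bs.map fun b => u ++ [b]) [[]] ?_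
  refine Primrec.list_flatMap Primrec.snd ?_
  refine Primrec.list_map (Primrec.const bs) ?_
  exact Primrec.list_concat.comp (Primrec.snd.comp Primrec.fst) Primrec.snd

theorem continuous_pre {A : Type*} [TopologicalSpace A] [DiscreteTopology A] (n : ℕ) :
    IsLocallyConstant (fun x : ℕ → A => pre x n) := by
  rw [IsLocallyConstant.iff_eventually_eq]
  intro x
  have : ∀ᶠ y in nhds x, ∀ i ∈ Finset.range n, y i = x i := by
    rw [Filter.eventually_all_finset]
    intro i _
    have hc : Continuous fun y : ℕ → A => y i := continuous_apply i
    exact hc.continuousAt.eventually (p := fun a => a = x i)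
      (by rw [nhds_discrete]; exact rfl)
  filter_upwards [this] with y hy
  rw [pre_eq_iff]
  intro i hi
  exact hy i (Finset.mem_range.2 hi)

theorem isClosed_pre {A : Type*} [TopologicalSpace A] [DiscreteTopology A] (n : ℕ)
    (R : List A → Prop) : IsClosed {x : ℕ → A | R (pre x n)} :=
  ⟨(continuous_pre n) {u | ¬ R u}⟩

/-- König's lemma. -/
theorem konig {B : Type*} [Finite B] (S : List B → Prop)
    (hS : ∀ u k, S u → S (u.take k)) (h : ∀ n, ∃ u, u.length = n ∧ S u) :
    ∃ z : ℕ → B, ∀ n, S (pre z n) := by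
  let _ : TopologicalSpace B := ⊥
  have : DiscreteTopology B := ⟨rfl⟩
  have := IsCompact.nonempty_iInter_of_sequence_nonempty_isCompact_isClosed
    (fun n => {z : ℕ → B | S (pre z n)}) (by
      intro n z hz
      have := hS _ n hz
      rwa [take_pre _ _ _ (Nat.le_succ n)] at this) (by
      intro n
      obtain ⟨u, hu, hSu⟩ := h n
      obtain ⟨v, hv, _⟩ := h 1
      have hB : Nonempty B := by
        cases v with
        | nil => simp at hv
        | cons b _ => exact ⟨b⟩
      obtain ⟨b⟩ := hB
      refine ⟨fun i => u.getD i b, ?_⟩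
      have : pre (fun i => u.getD i b) n = u := by
        apply List.ext_getElem?
        intro i
        rw [getElem?_pre]
        split_ifs with hi
        · rw [← hu] at hi; simp [hi]
        · simp; omega
      change S (pre _ n)
      rwa [this]) (isClosed_pre _ _).isCompact (fun n => isClosed_pre _ _)
  obtain ⟨z, hz⟩ := this
  exact ⟨z, fun n => by simpa using Set.mem_iInter.1 hz n⟩

theorem isClosed_image {A B : Type*} [TopologicalSpace A] [DiscreteTopology A] [Finite B]
    (R : List B → Prop) (q : ℕ → ℕ) (F : ℕ → B → A) :
    IsClosed {y : ℕ → A | ∃ z : ℕ → B, (∀ n, R (pre z n)) ∧ ∀ n, y n = F n (z (q n))} := by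
  let _ : TopologicalSpace B := ⊥
  have : DiscreteTopology B := ⟨rfl⟩
  have hc : IsClosed {z : ℕ → B | ∀ n, R (pre z n)} := by
    rw [Set.ofPred_forall]; exact isClosed_iInter fun n => isClosed_pre n R
  have hf : Continuous fun (z : ℕ → B) n => F n (z (q n)) :=
    continuous_pi fun n => continuous_of_discreteTopology.comp (continuous_apply (q n))
  have := (hc.isCompact.image hf).isClosed
  convert this using 1
  ext y
  simp only [Set.mem_ofPred_eq, Set.mem_image]
  constructor
  · rintro ⟨z, h1, h2⟩; exact ⟨z, h1, (funext h2).symm⟩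
  · rintro ⟨z, h1, rfl⟩; exact ⟨z, h1, fun _ => rfl⟩

theorem effClosed_image {A B : Type*} [Primcodable A] [TopologicalSpace A]
    [DiscreteTopology A] [Primcodable B] [Finite B] (R : List B → Prop) (hR : PrimrecPred R)
    (q : ℕ → ℕ) (hq : Primrec q) (F : ℕ → B → A) (hF : Primrec₂ F) :
    EffectivelyClosedSet
      {y : ℕ → A | ∃ z : ℕ → B, (∀ n, R (pre z n)) ∧ ∀ n, y n = F n (z (q n))} := by
  refine ⟨isClosed_image R q F, ?_⟩
  have := Fintype.ofFinite B
  let bs : List B := Finset.univ.toList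
  have hbs : ∀ b, b ∈ bs := by simp [bs]
  let S : List B → List A → Prop := fun u w =>
    (∀ k < u.length + 1, R (u.take k)) ∧
      ∀ i < w.length, u[q i]? = none ∨ w[i]? = (u[q i]?).map (F i)
  have hSp : PrimrecRel S := by
    have h1 : PrimrecRel fun (k : ℕ) (p : List B × List A) => R (p.1.take k) :=
      hR.comp (Primrec.list_take.comp Primrec.fst (Primrec.fst.comp Primrec.snd))
    have h1'' : PrimrecPred fun p : List B × List A =>
        ∀ k < p.1.length + 1, R (p.1.take k) :=
      (prim_forall_lt h1).comp (Primrec.succ.comp (Primrec.list_length.comp Primrec.fst)) Primrec.id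
    have hu : Primrec fun a : ℕ × (List B × List A) => a.2.1[q a.1]? :=
      Primrec.list_getElem?.comp (Primrec.fst.comp Primrec.snd) (hq.comp Primrec.fst)
    have hw : Primrec fun a : ℕ × (List B × List A) => a.2.2[a.1]? :=
      Primrec.list_getElem?.comp (Primrec.snd.comp Primrec.snd) Primrec.fst
    have hm : Primrec fun a : ℕ × (List B × List A) => (a.2.1[q a.1]?).map (F a.1) :=
      Primrec.option_map hu (hF.comp (Primrec.fst.comp Primrec.fst) Primrec.snd)
    have h2 : PrimrecRel fun (i : ℕ) (p : List B × List A) =>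
        p.1[q i]? = none ∨ p.2[i]? = (p.1[q i]?).map (F i) :=
      PrimrecPred.or (Primrec.eq.comp hu (Primrec.const none)) (Primrec.eq.comp hw hm)
    have h2'' : PrimrecPred fun p : List B × List A => ∀ i < p.2.length,
        p.1[q i]? = none ∨ p.2[i]? = (p.1[q i]?).map (F i) :=
      (prim_forall_lt h2).comp (Primrec.list_length.comp Primrec.snd) Primrec.id
    exact h1''.and h2''
  have hP : PrimrecRel fun (w : List A) (n : ℕ) => ∀ u ∈ allWords bs n, ¬ S u w :=
    (hSp.not.forall_mem_list).comp ((primrec_allWords bs).comp Primrec.snd) Primrec.fst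
  have := RE_exists hP
  refine REPred.of_eq this ?_
  intro w
  constructor
  · rintro ⟨n, hn⟩ y hy ⟨z, hz, hyz⟩
    refine hn (pre z n) ((mem_allWords bs hbs _ _).2 (length_pre z n)) ⟨?_, ?_⟩
    · intro k hk
      rw [length_pre] at hk
      rw [take_pre _ _ _ (by omega)]
      exact hz k
    · intro i hi
      rw [extendsWord_iff] at hy
      rw [getElem?_pre, hy i hi, hyz]
      split_ifs <;> simp
  · intro h
    by_contra hcon
    push Not at hcon
    obtain ⟨z, hz⟩ := konig (fun u => S u w) (by
      rintro u k ⟨h1, h2⟩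
      refine ⟨fun j hj => ?_, fun i hi => ?_⟩
      · rw [List.take_take]
        exact h1 _ (by simp at hj; omega)
      · rw [List.getElem?_take]
        split_ifs
        · exact h2 i hi
        · simp) (by
      intro n
      obtain ⟨u, hu, hS⟩ := hcon n
      exact ⟨u, (mem_allWords bs hbs _ _).1 hu, hS⟩)
    refine h (fun n => F n (z (q n))) ?_ ⟨z, ?_, fun _ => rfl⟩
    · rw [extendsWord_iff]
      intro i hi
      have := (hz (q i + 1)).2 i hi
      rw [getElem?_pre] at this
      simpa using this
    · intro n
      have := (hz n).1 n (by simp)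
      rwa [take_pre _ _ _ le_rfl] at this

theorem effClosed_normal {A : Type*} [Primcodable A] [TopologicalSpace A]
    [DiscreteTopology A] {Z : Set (ℕ → A)} (hZ : EffectivelyClosedSet Z) :
    ∃ R : List A → Prop, PrimrecPred R ∧ Z = {x | ∀ n, R (pre x n)} := by
  obtain ⟨hc, hre⟩ := hZ
  obtain ⟨E, hE, hEp⟩ := RE_normal hre
  refine ⟨fun u => ∀ i < u.length + 1, ∀ k < u.length + 1, ¬ E (u.take i) k, ?_, ?_⟩
  · have h1 : PrimrecRel fun (k : ℕ) (p : ℕ × List A) => ¬ E (p.2.take p.1) k :=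
      hE.not.comp (Primrec.list_take.comp (Primrec.fst.comp Primrec.snd)
        (Primrec.snd.comp Primrec.snd)) Primrec.fst
    have h2 : PrimrecRel fun (i : ℕ) (u : List A) =>
        ∀ k < u.length + 1, ¬ E (u.take i) k :=
      (prim_forall_lt h1).comp (Primrec.succ.comp (Primrec.list_length.comp Primrec.snd))
        (Primrec.pair Primrec.fst Primrec.snd)
    exact (prim_forall_lt h2).comp (Primrec.succ.comp Primrec.list_length) Primrec.id
  · ext x
    simp only [Set.mem_ofPred_eq, length_pre]
    constructor
    · intro hx n i hi k _ hcon
      rw [take_pre _ _ _ (by omega)] at hcon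
      exact (hEp _).2 ⟨k, hcon⟩ x ((extendsWord_pre _ _ _).2 fun _ _ => rfl) hx
    · intro h
      by_contra hx
      have hnhds : Zᶜ ∈ nhds x := hc.isOpen_compl.mem_nhds hx
      rw [nhds_pi, Filter.mem_pi] at hnhds
      obtain ⟨I, hI, t, ht, hsub⟩ := hnhds
      obtain ⟨n, hn⟩ := hI.bddAbove
      have : ∀ y : ℕ → A, ExtendsWord y (pre x (n + 1)) → y ∉ Z := by
        intro y hy
        rw [extendsWord_pre] at hy
        apply hsub
        intro i hi
        rw [hy i (Nat.lt_succ_of_le (hn hi))]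
        exact mem_of_mem_nhds (ht i)
      obtain ⟨k, hk⟩ := (hEp _).1 this
      refine h (n + 1 + k) (n + 1) (by omega) k (by omega) ?_
      rwa [take_pre _ _ _ (by omega)]

theorem effClosed_of_normal {A : Type*} [Primcodable A] [TopologicalSpace A]
    [DiscreteTopology A] [Finite A] (R : List A → Prop) (hR : PrimrecPred R) :
    EffectivelyClosedSet {x : ℕ → A | ∀ n, R (pre x n)} := by
  have := effClosed_image (A := A) R hR id Primrec.id (fun _ b => b) Primrec₂.right
  convert this using 1
  ext x
  constructor
  · intro h; exact ⟨x, h, fun _ => rfl⟩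
  · rintro ⟨z, hz, h⟩
    have : x = z := funext h
    subst this; exact hz

theorem effClosed_map {A B : Type*} [Primcodable A] [TopologicalSpace A]
    [DiscreteTopology A] [Primcodable B] [TopologicalSpace B]
    [DiscreteTopology B] [Finite B] {Z : Set (ℕ → B)} (hZ : EffectivelyClosedSet Z)
    (q : ℕ → ℕ) (hq : Primrec q) (F : ℕ → B → A) (hF : Primrec₂ F) :
    EffectivelyClosedSet {y : ℕ → A | ∃ z ∈ Z, ∀ n, y n = F n (z (q n))} := by
  obtain ⟨R, hR, rfl⟩ := effClosed_normal hZ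
  exact effClosed_image R hR q hq F hF

theorem effClosed_inter {A : Type*} [Primcodable A] [TopologicalSpace A]
    [DiscreteTopology A] [Finite A] {Z W : Set (ℕ → A)} (hZ : EffectivelyClosedSet Z)
    (hW : EffectivelyClosedSet W) : EffectivelyClosedSet (Z ∩ W) := by
  obtain ⟨R, hR, rfl⟩ := effClosed_normal hZ
  obtain ⟨S, hS, rfl⟩ := effClosed_normal hW
  convert effClosed_of_normal _ (hR.and hS) using 1
  ext x
  simp [forall_and]

theorem effClosed_univ {A : Type*} [Primcodable A] [TopologicalSpace A]
    [DiscreteTopology A] [Finite A] : EffectivelyClosedSet (Set.univ : Set (ℕ → A)) := by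
  convert effClosed_of_normal (fun _ : List A => True) ?_ using 1
  · simp
  · exact ⟨inferInstance, by simpa using Primrec.const true⟩

theorem effClosed_preimage {A B : Type*} [Primcodable A] [TopologicalSpace A]
    [DiscreteTopology A] [Primcodable B] [TopologicalSpace B]
    [DiscreteTopology B] [Finite B] {Z : Set (ℕ → A)} (hZ : EffectivelyClosedSet Z)
    (f : B → A) :
    EffectivelyClosedSet {z : ℕ → B | (fun n => f (z n)) ∈ Z} := by
  obtain ⟨R, hR, rfl⟩ := effClosed_normal hZ
  have h : PrimrecPred fun u : List B => R (u.map f) :=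
    hR.comp (Primrec.list_map Primrec.id ((Primrec.dom_finite f).comp Primrec.snd))
  convert effClosed_of_normal _ h using 1
  ext x
  simp [pre, Function.comp_def]

theorem effClosed_forall {A : Type*} [Primcodable A] [TopologicalSpace A]
    [DiscreteTopology A] [Finite A] {N : ℕ} {Z : Fin N → Set (ℕ → A)}
    (hZ : ∀ j, EffectivelyClosedSet (Z j)) : EffectivelyClosedSet {x | ∀ j, x ∈ Z j} := by
  induction N with
  | zero => convert effClosed_univ (A := A) using 1; simp
  | succ N ih =>
    convert effClosed_inter (hZ 0) (ih (Z := fun j => Z j.succ) fun j => hZ _) using 1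
    ext x
    simp [Fin.forall_fin_succ]

end SelfSim

namespace SelfSim

theorem setRep_comp {G : Type*} [Group G] {X : Set (ℕ → Bool)}
    {act : G → (ℕ → Bool) → ℕ → Bool} {N N' : ℕ} (t : Fin N → G)
    (ht : EffectivelyClosedSet (SetRep t act X)) (f : Fin N' → Fin N) :
    EffectivelyClosedSet (SetRep (t ∘ f) act X) := by
  have h := effClosed_map (A := Fin N' → Bool) ht id Primrec.id (fun _ b => b ∘ f)
    ((Primrec.dom_finite (fun b : Fin N → Bool => b ∘ f)).comp Primrec.snd)
  convert h using 1
  ext y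
  constructor
  · rintro ⟨x, hx, hy⟩
    refine ⟨fun n i => act (t i) x n, ⟨x, hx, fun i => rfl⟩, fun n => ?_⟩
    funext i
    exact congrFun (hy i) n
  · rintro ⟨z, ⟨x, hx, hz⟩, hy⟩
    refine ⟨x, hx, fun i => ?_⟩
    rw [Function.comp, ← hz]
    funext n
    rw [hy n]; rfl

theorem setRep_step {G : Type*} [Group G] {X : Set (ℕ → Bool)}
    {act : G → (ℕ → Bool) → ℕ → Bool} (hact : IsActionOn act X) {m N : ℕ} (s : Fin m → G)
    (i₀ : Fin m) (hi₀ : s i₀ = 1)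
    (hs : EffectivelyClosedSet (SetRep s act X)) (t : Fin N → G)
    (ht : EffectivelyClosedSet (SetRep t act X)) :
    EffectivelyClosedSet (SetRep
      (fun l : Fin (m * N) => s (finProdFinEquiv.symm l).1 * t (finProdFinEquiv.symm l).2)
      act X) := by
  have h1 := effClosed_preimage ht
    (fun (b : Fin (m * N) → Bool) (j : Fin N) => b (finProdFinEquiv (i₀, j)))
  have h2 := effClosed_forall fun j : Fin N => effClosed_preimage hs
    (fun (b : Fin (m * N) → Bool) (i : Fin m) => b (finProdFinEquiv (i, j)))
  convert effClosed_inter h1 h2 using 1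
  ext y
  constructor
  · rintro ⟨x, hx, hy⟩
    refine ⟨⟨x, hx, fun j => ?_⟩, fun j => ⟨act (t j) x, hact.1 _ hx, fun i => ?_⟩⟩
    · simpa [hi₀] using hy (finProdFinEquiv (i₀, j))
    · have := hy (finProdFinEquiv (i, j))
      simp only [Equiv.symm_apply_apply] at this
      rw [this, hact.2.2 _ _ _ hx]
  · rintro ⟨⟨x, hx, hy⟩, hz⟩
    refine ⟨x, hx, fun l => ?_⟩
    obtain ⟨⟨i, j⟩, rfl⟩ := finProdFinEquiv.surjective l
    simp only [Equiv.symm_apply_apply]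
    obtain ⟨x', hx', hy'⟩ := hz j
    have e1 := hy j
    have e2 := hy' i₀
    have e3 := hy' i
    rw [hi₀, hact.2.1 _ hx'] at e2
    rw [hact.2.2 _ _ _ hx, e3, ← e1, ← e2]

theorem setRep_mul {G : Type*} [Group G] {X : Set (ℕ → Bool)}
    {act : G → (ℕ → Bool) → ℕ → Bool} {m : ℕ} {s : Fin m → G}
    (h : IsEffClosedActionWith s act X) (g : G) :
    ∀ (N : ℕ) (t : Fin N → G), EffectivelyClosedSet (SetRep t act X) →
      ∃ (N' : ℕ) (t' : Fin N' → G), EffectivelyClosedSet (SetRep t' act X) ∧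
        Set.range t ⊆ Set.range t' ∧ ∀ k ∈ Set.range t, g * k ∈ Set.range t' := by
  obtain ⟨-, hact, ⟨i₀, hi₀⟩, hcl, hs⟩ := h
  have hg : g ∈ Submonoid.closure (Set.range s) := by rw [hcl]; trivial
  induction hg using Submonoid.closure_induction with
  | mem x hx =>
    obtain ⟨i, rfl⟩ := hx
    intro N t ht
    refine ⟨_, _, setRep_step hact s i₀ hi₀ hs t ht, ?_, ?_⟩
    · rintro _ ⟨j, rfl⟩
      exact ⟨finProdFinEquiv (i₀, j), by simp [hi₀]⟩
    · rintro _ ⟨j, rfl⟩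
      exact ⟨finProdFinEquiv (i, j), by simp⟩
  | one => intro N t ht; exact ⟨N, t, ht, subset_rfl, by simp⟩
  | mul x y _ _ ihx ihy =>
    intro N t ht
    obtain ⟨N1, t1, h1, h1', h1''⟩ := ihy N t ht
    obtain ⟨N2, t2, h2, h2', h2''⟩ := ihx N1 t1 h1
    refine ⟨N2, t2, h2, h1'.trans h2', fun k hk => ?_⟩
    rw [mul_assoc]
    exact h2'' _ (h1'' _ hk)

theorem setRep_all {G : Type*} [Group G] {X : Set (ℕ → Bool)}
    {act : G → (ℕ → Bool) → ℕ → Bool} {m : ℕ} {s : Fin m → G}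
    (h : IsEffClosedActionWith s act X) {N : ℕ} (t : Fin N → G) :
    EffectivelyClosedSet (SetRep t act X) := by
  classical
  have key : ∀ T : Finset G, ∃ (N' : ℕ) (t' : Fin N' → G),
      EffectivelyClosedSet (SetRep t' act X) ∧ 1 ∈ Set.range t' ∧
        ∀ g ∈ T, g ∈ Set.range t' := by
    intro T
    induction T using Finset.induction_on with
    | empty => exact ⟨m, s, h.2.2.2.2, h.2.2.1, by simp⟩
    | insert g T _ ih =>
      obtain ⟨N1, t1, h1, h1', h1''⟩ := ih
      obtain ⟨N2, t2, h2, h2', h2''⟩ := setRep_mul h g N1 t1 h1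
      refine ⟨N2, t2, h2, h2' h1', ?_⟩
      intro k hk
      rcases Finset.mem_insert.1 hk with rfl | hk
      · simpa using h2'' 1 h1'
      · exact h2' (h1'' k hk)
  obtain ⟨N', t', h1, -, h2⟩ := key (Finset.univ.image t)
  have h3 : ∀ j, ∃ i, t' i = t j := fun j => h2 (t j) (by simp)
  choose f hf using h3
  have := setRep_comp t' h1 f
  convert this using 2
  funext j
  exact (hf j).symm

theorem continuousOn_act {G : Type*} [Group G] {X : Set (ℕ → Bool)}
    {act : G → (ℕ → Bool) → ℕ → Bool} {m : ℕ} {s : Fin m → G}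
    (h : IsEffClosedActionWith s act X) (g : G) : ContinuousOn (act g) X := by
  have hc := (setRep_all h ![1, g]).1
  rw [continuousOn_iff_isClosed]
  intro C hC
  have c0 : Continuous fun (y : ℕ → Fin 2 → Bool) n => y n 0 := by fun_prop
  have c1 : Continuous fun (y : ℕ → Fin 2 → Bool) n => y n 1 := by fun_prop
  refine ⟨(fun (y : ℕ → Fin 2 → Bool) n => y n 0) ''
    (SetRep ![1, g] act X ∩ (fun (y : ℕ → Fin 2 → Bool) n => y n 1) ⁻¹' C), ?_, ?_⟩
  · exact ((hc.inter (hC.preimage c1)).isCompact.image c0).isClosed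
  · ext x
    constructor
    · rintro ⟨hx, hxX⟩
      refine ⟨⟨fun n => ![x n, act g x n], ⟨⟨x, hxX, ?_⟩, hx⟩, rfl⟩, hxX⟩
      intro i
      fin_cases i
      · simp [h.2.1.2.1 x hxX]
      · simp
    · rintro ⟨⟨y, ⟨⟨x', hx', hy⟩, hyC⟩, rfl⟩, hxX⟩
      have e0 := hy 0
      have e1 := hy 1
      simp only [Matrix.cons_val_zero, Matrix.cons_val_one, h.2.1.2.1 x' hx'] at e0 e1
      refine ⟨?_, hxX⟩
      change act g (fun n => y n 0) ∈ C
      rw [e0, ← e1]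
      exact hyC

theorem exists_gens (G : Type*) [Group G] (h : Group.FG G) :
    ∃ (m : ℕ) (s : Fin m → G), (∃ i, s i = 1) ∧ Submonoid.closure (Set.range s) = ⊤ := by
  obtain ⟨S, hS, hf⟩ := Monoid.fg_iff.1 (Group.fg_iff_monoid_fg.1 h)
  obtain ⟨m, s, -, hs⟩ := (hf.insert 1).fin_param
  refine ⟨m, s, ?_, ?_⟩
  · have : (1 : G) ∈ Set.range s := by rw [hs]; simp
    exact this
  · rw [hs, eq_top_iff, ← hS]
    exact Submonoid.closure_mono (Set.subset_insert _ _)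

theorem isSFT_of {G A : Type*} [Group G] (X : Set (G → A)) (F : Finset G)
    (P : (G → A) → Prop) (hP : ∀ x y, (∀ g ∈ F, x g = y g) → P x → P y)
    (h : ∀ x, x ∈ X ↔ ∀ g, P (fun k => x (g * k))) : IsSFT X := by
  refine ⟨F, {p | ∃ x : G → A, (∀ g : F, x g = p g) ∧ P x}, fun x => ?_⟩
  rw [h]
  refine forall_congr' fun g => ?_
  constructor
  · intro hp
    exact ⟨_, fun _ => rfl, hp⟩
  · rintro ⟨y, hy, hp⟩
    exact hP y _ (fun k hk => hy ⟨k, hk⟩) hp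

theorem isSFT_shift {G A : Type*} [Group G] {X : Set (G → A)} (hX : IsSFT X) (g : G)
    {x : G → A} (hx : x ∈ X) : shift g x ∈ X := by
  obtain ⟨F, L, h⟩ := hX
  rw [h] at hx ⊢
  intro k
  have := hx (g⁻¹ * k)
  simpa [shift, mul_assoc] using this

theorem isFactorOfSFT_of {G A : Type*} [Group G] [Finite A] [TopologicalSpace A]
    [DiscreteTopology A] {X : Set (ℕ → Bool)} {act : G → (ℕ → Bool) → ℕ → Bool}
    (Z : Set (G → A)) (φ : (G → A) → ℕ → Bool) (hZ : IsSFT Z)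
    (hφ : IsFactorMapOnto Z φ act X) : IsFactorOfSFT act X := by
  let e := Finite.equivFin A
  obtain ⟨F, L, hL⟩ := hZ
  obtain ⟨h1, h2, h3, h4⟩ := hφ
  refine ⟨Nat.card A, {z | (fun g => e.symm (z g)) ∈ Z}, fun z => φ fun g => e.symm (z g),
    ?_, ?_, ?_, ?_, ?_⟩
  · refine isSFT_of _ F (fun x => (fun h : F => e.symm (x h)) ∈ L) ?_ ?_
    · intro x y hxy hx
      have : (fun h : F => e.symm (y h)) = fun h : F => e.symm (x h) := by
        funext h; rw [hxy h h.2]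
      rw [this]; exact hx
    · intro x
      exact hL _
  · refine h1.comp (Continuous.continuousOn ?_) (fun z hz => hz)
    exact continuous_pi fun g => continuous_of_discreteTopology.comp (continuous_apply g)
  · intro z hz; exact h2 hz
  · intro x hx
    obtain ⟨z, hz, rfl⟩ := h3 hx
    exact ⟨fun g => e (z g), by simpa using hz, by simp⟩
  · intro g z hz
    exact h4 g _ hz

end SelfSim

namespace SelfSim

theorem selfSimulable_of_hom {G H : Type*} [Group G] [Group H] (hH : Group.FG H)
    (f : H →* G) (hf : Function.Injective f) (hfi : f.range.FiniteIndex)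
    (hsim : SelfSimulable H) : SelfSimulable G := by
  classical
  intro X act ⟨m, s, hs⟩
  obtain ⟨N, u, hu1, hucl⟩ := exists_gens H hH
  have hact := hs.2.1
  have hH : IsEffClosedAction (fun h => act (f h)) X := by
    refine ⟨N, u, hs.1, ⟨fun h => hact.1 _, fun x hx => ?_, fun g h x hx => ?_⟩, hu1, hucl, ?_⟩
    · simpa using hact.2.1 x hx
    · simpa using hact.2.2 (f g) (f h) x hx
    · exact setRep_all hs (f ∘ u)
  obtain ⟨k, Z, φ, ⟨F, L, hL⟩, h1, h2, h3, h4⟩ := hsim X _ hH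
  let Q := G ⧸ f.range
  let _ : TopologicalSpace Q := ⊥
  have : DiscreteTopology Q := ⟨rfl⟩
  have : Finite Q := Subgroup.finite_quotient_of_finiteIndex
  let o : Q := ((1 : G) : G ⧸ f.range)
  let W : Set (G → Q × Fin k) := {w | ∀ g, (∀ i, (w (g * s i)).1 = (s i)⁻¹ • (w g).1) ∧
    ((w g).1 = o → (fun h : F => (w (g * f h)).2) ∈ L)}
  have hW : IsSFT W := by
    refine isSFT_of W (insert 1 (Finset.univ.image s ∪ F.image f))
      (fun w => (∀ i, (w (s i)).1 = (s i)⁻¹ • (w 1).1) ∧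
        ((w 1).1 = o → (fun h : F => (w (f h)).2) ∈ L)) ?_ ?_
    · intro x y hxy ⟨hx1, hx2⟩
      have e1 : x 1 = y 1 := hxy 1 (by simp)
      have e2 : ∀ i, x (s i) = y (s i) := fun i => hxy _ (by simp)
      have e3 : ∀ h : F, x (f h) = y (f h) := fun h => hxy _ (by
        simp only [Finset.mem_insert, Finset.mem_union, Finset.mem_image]
        exact Or.inr (Or.inr ⟨h, h.2, rfl⟩))
      simp only [e1, e2, e3] at hx1 hx2
      exact ⟨hx1, hx2⟩
    · intro w
      simp only [mul_one]
      exact Iff.rfl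
  have hWc : ∀ w ∈ W, ∀ g k, (w (k * g)).1 = g⁻¹ • (w k).1 := by
    intro w hw g
    have hg : g ∈ Submonoid.closure (Set.range s) := by rw [hs.2.2.2.1]; trivial
    induction hg using Submonoid.closure_induction with
    | mem x hx => obtain ⟨i, rfl⟩ := hx; intro k; exact (hw k).1 i
    | one => simp
    | mul x y _ _ ihx ihy =>
      intro k
      rw [← mul_assoc, ihy, ihx, mul_inv_rev, mul_smul]
  let ρ : G → (G → Q × Fin k) → H → Fin k := fun r w h => (w (r * f h)).2
  have hρZ : ∀ w ∈ W, ∀ r : G, (w 1).1 = (r : G ⧸ f.range) → ρ r w ∈ Z := by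
    intro w hw r hr
    rw [hL]
    intro h
    have hh : (w (r * f h)).1 = o := by
      have := hWc w hw (r * f h) 1
      rw [one_mul] at this
      rw [this, hr]
      change (((r * f h)⁻¹ * r : G) : G ⧸ f.range) = ((1 : G) : G ⧸ f.range)
      rw [QuotientGroup.eq]
      exact ⟨h, by group⟩
    have := (hw (r * f h)).2 hh
    simpa [ρ, mul_assoc] using this
  let Φ : (G → Q × Fin k) → ℕ → Bool := fun w =>
    act (w 1).1.out (φ (ρ (w 1).1.out w))
  have hout : ∀ q : Q, ((q.out : G) : G ⧸ f.range) = q := fun q => Quotient.out_eq' q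
  have hΦ : ∀ w ∈ W, ∀ r : G, (w 1).1 = (r : G ⧸ f.range) → Φ w = act r (φ (ρ r w)) := by
    intro w hw r hr
    set r' := (w 1).1.out with hr'
    have hr1 : (w 1).1 = (r' : G ⧸ f.range) := (hout _).symm
    have : ((r : G) : G ⧸ f.range) = r' := by rw [← hr, ← hr1]
    rw [QuotientGroup.eq] at this
    obtain ⟨h, hh⟩ := this
    have e : r' = r * f h := by rw [hh]; group
    have e2 : ρ r' w = shift h⁻¹ (ρ r w) := by
      funext k
      simp [ρ, shift, e, mul_assoc]
    have hZ := hρZ w hw r hr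
    change act r' (φ (ρ r' w)) = _
    rw [e2, h4 _ _ hZ, e, ← hact.2.2 _ _ _ (h2 hZ), map_inv, mul_inv_cancel_right]
  refine isFactorOfSFT_of W Φ hW ⟨?_, ?_, ?_, ?_⟩
  · intro w₀ hw₀
    let q₀ := (w₀ 1).1
    have hU : {w : G → Q × Fin k | (w 1).1 = q₀} ∈ nhds w₀ := by
      have hc : Continuous fun w : G → Q × Fin k => (w 1).1 := by fun_prop
      exact hc.continuousAt.preimage_mem_nhds (t := {q₀})
        (by rw [nhds_discrete]; exact rfl)
    rw [← continuousWithinAt_inter hU]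
    have hcρ : Continuous (ρ q₀.out) := by fun_prop
    have hc : ContinuousOn (fun w => act q₀.out (φ (ρ q₀.out w)))
        (W ∩ {w : G → Q × Fin k | (w 1).1 = q₀}) := by
      refine (continuousOn_act hs q₀.out).comp (h1.comp hcρ.continuousOn ?_) ?_
      · rintro w ⟨hw, hq⟩
        exact hρZ w hw _ (by rw [hout]; exact hq)
      · rintro w ⟨hw, hq⟩
        exact h2 (hρZ w hw _ (by rw [hout]; exact hq))
    refine (hc w₀ ⟨hw₀, rfl⟩).congr ?_ rfl
    rintro w ⟨hw, hq⟩
    exact hΦ w hw _ (by rw [hout]; exact hq)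
  · intro w hw
    exact hact.1 _ (h2 (hρZ w hw _ (hout _).symm))
  · intro x hx
    obtain ⟨z, hz, rfl⟩ := h3 hx
    let w : G → Q × Fin k := fun g =>
      (((g⁻¹ : G) : G ⧸ f.range), Function.extend f z (fun _ => z 1) g)
    have hw : w ∈ W := by
      intro g
      refine ⟨fun i => ?_, fun hg => ?_⟩
      · change (((g * s i)⁻¹ : G) : G ⧸ f.range) = (((s i)⁻¹ * g⁻¹ : G) : G ⧸ f.range)
        rw [mul_inv_rev]
      · change ((g⁻¹ : G) : G ⧸ f.range) = ((1 : G) : G ⧸ f.range) at hg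
        rw [QuotientGroup.eq] at hg
        obtain ⟨h, hh⟩ := hg
        have e : g = f h := by rw [hh]; group
        have := (hL z).1 hz h
        convert this using 2 with k
        change Function.extend f z (fun _ => z 1) (g * f k) = _
        rw [e, ← map_mul, hf.extend_apply]
    refine ⟨w, hw, ?_⟩
    rw [hΦ w hw 1 (by simp [w])]
    have : ρ 1 w = z := by
      funext h
      simp [ρ, w, hf.extend_apply]
    rw [this, hact.2.1 _ (h2 hz)]
  · intro g w hw
    have hsw := isSFT_shift hW g hw
    set r := (w 1).1.out with hr
    have hr1 : (w 1).1 = (r : G ⧸ f.range) := (hout _).symm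
    rw [hΦ w hw r hr1, hΦ _ hsw (g * r), ← hact.2.2 _ _ _ (h2 (hρZ w hw r hr1))]
    · congr 2
      funext h
      simp [ρ, shift, mul_assoc]
    · have := hWc w hw g⁻¹ 1
      simp only [shift, mul_one]
      rw [one_mul, inv_inv] at this
      rw [this, hr1]; rfl

end SelfSim

namespace SelfSim

theorem selfSimulable_subgroup {G : Type*} [Group G] (hG : Group.FG G) (H : Subgroup G)
    (hfi : H.FiniteIndex) (hsim : SelfSimulable G) : SelfSimulable H := by
  classical
  intro X act ⟨m, s, hs⟩
  have hact := hs.2.1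
  obtain ⟨N, t, ht1, htcl⟩ := exists_gens G hG
  let Q := G ⧸ H
  have : Finite Q := Subgroup.finite_quotient_of_finiteIndex
  have := Fintype.ofFinite Q
  let o : Q := ((1 : G) : G ⧸ H)
  obtain ⟨r, hr, hro⟩ : ∃ r : Q → G, (∀ q, ((r q : G) : G ⧸ H) = q) ∧ r o = 1 := by
    refine ⟨fun q => if q = o then 1 else q.out, fun q => ?_, by simp⟩
    by_cases hq : q = o
    · simp only [hq, if_true]; rfl
    · simp only [hq, if_false]; exact Quotient.out_eq' q
  let κ : G → Q → H := fun g q => ⟨(r q)⁻¹ * (g * r (g⁻¹ • q)), by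
    rw [← QuotientGroup.eq, hr]
    change q = g • ((r (g⁻¹ • q) : G) : G ⧸ H)
    rw [hr, smul_inv_smul]⟩
  have κ_one : ∀ q, κ 1 q = 1 := by
    intro q; ext; simp [κ]
  have κ_mul : ∀ g g' q, κ (g * g') q = κ g q * κ g' (g⁻¹ • q) := by
    intro g g' q; ext; simp [κ, mul_smul, mul_assoc]
  have smul_o : ∀ h : H, ((h : G)⁻¹ • o : Q) = o := by
    intro h
    change (((h : G)⁻¹ * 1 : G) : G ⧸ H) = ((1 : G) : G ⧸ H)
    rw [QuotientGroup.eq]; simp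
  have κ_o : ∀ h : H, κ h o = h := by
    intro h; ext; simp [κ, smul_o, hro]
  let M := Nat.card Q
  let ε : Q ≃ Fin M := Finite.equivFin Q
  have hM : 0 < M := (ε o).pos
  let md : ℕ → Fin M := fun n => ⟨n % M, Nat.mod_lt _ hM⟩
  let dec : (ℕ → Bool) → Q → ℕ → Bool := fun x q n => x (n * M + ε q)
  let enc : (Q → ℕ → Bool) → ℕ → Bool := fun ξ n => ξ (ε.symm (md n)) (n / M)
  have dec_enc : ∀ ξ q, dec (enc ξ) q = ξ q := by
    intro ξ q
    funext n
    have e1 : md (n * M + ε q) = ε q := by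
      ext; simp [md, Nat.mod_eq_of_lt]
    have e2 : (n * M + ε q) / M = n := by
      rw [mul_comm, Nat.mul_add_div hM, Nat.div_eq_of_lt (ε q).2, add_zero]
    simp only [dec, enc, e1, e2, Equiv.symm_apply_apply]
  have enc_dec : ∀ x, enc (dec x) = x := by
    intro x
    funext n
    simp only [dec, enc, Equiv.apply_symm_apply, md]
    rw [Nat.div_add_mod']
  have dec_cont : ∀ q, Continuous fun x => dec x q := by
    intro q; fun_prop
  have enc_apply : ∀ ξ n, enc ξ n = ξ (ε.symm (md n)) (n / M) := fun _ _ => rfl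
  clear_value dec enc
  let X' : Set (ℕ → Bool) := {x | ∀ q, dec x q ∈ X}
  let act' : G → (ℕ → Bool) → ℕ → Bool := fun g x =>
    enc fun q => act (κ g q) (dec x (g⁻¹ • q))
  have act'_def : ∀ g x, act' g x = enc fun q => act (κ g q) (dec x (g⁻¹ • q)) :=
    fun _ _ => rfl
  clear_value act'
  have hX' : IsClosed X' := by
    have : X' = ⋂ q, (fun x => dec x q) ⁻¹' X := by ext; simp [X']
    rw [this]
    exact isClosed_iInter fun q => hs.1.preimage (dec_cont q)
  have hact' : IsActionOn act' X' := by
    refine ⟨fun g x hx q => ?_, fun x hx => ?_, fun g h x hx => ?_⟩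
    · rw [act'_def, dec_enc]; exact hact.1 _ (hx _)
    · rw [act'_def]
      conv_rhs => rw [← enc_dec x]
      congr 1
      funext q
      rw [κ_one, hact.2.1 _ (hx _), inv_one, one_smul]
    · rw [act'_def, act'_def g]
      congr 1
      funext q
      rw [act'_def, dec_enc, κ_mul, hact.2.2 _ _ _ (hx _), mul_inv_rev, mul_smul]
  have hrep : EffectivelyClosedSet (SetRep t act' X') := by
    let η : Fin (N * M) → H := fun j =>
      κ (t (finProdFinEquiv.symm j).1) (ε.symm (finProdFinEquiv.symm j).2)
    have hη : ∀ i c, η (finProdFinEquiv (i, c)) = κ (t i) (ε.symm c) := by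
      intro i c; simp only [η, Equiv.symm_apply_apply]
    clear_value η
    have h1 := setRep_all hs η
    have h2 := effClosed_forall fun c : Fin M => effClosed_preimage h1
      (fun (b : Fin (M * (N * M)) → Bool) (j : Fin (N * M)) => b (finProdFinEquiv (c, j)))
    let F0 : Fin M × (Fin (M * (N * M)) → Bool) → Fin N → Bool := fun p i =>
      p.2 (finProdFinEquiv (ε ((t i)⁻¹ • ε.symm p.1), finProdFinEquiv (i, p.1)))
    have hmd : Primrec md := Primrec.fin_val_iff.1
      (Primrec.nat_mod.comp Primrec.id (Primrec.const M))
    have hF : Primrec₂ fun (n : ℕ) b => F0 (md n, b) :=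
      (Primrec.dom_finite F0).comp (Primrec.pair (hmd.comp Primrec.fst) Primrec.snd)
    have h3 := effClosed_map h2 (fun n => n / M)
      (Primrec.nat_div.comp Primrec.id (Primrec.const M)) _ hF
    convert h3 using 1
    ext y
    constructor
    · rintro ⟨x, hx, hy⟩
      refine ⟨fun n l => act (η (finProdFinEquiv.symm l).2)
        (dec x (ε.symm (finProdFinEquiv.symm l).1)) n, fun c => ?_, fun n => ?_⟩
      · refine ⟨dec x (ε.symm c), hx _, fun j => ?_⟩
        funext n
        simp only [Equiv.symm_apply_apply]
      · funext i
        have := congrFun (hy i) n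
        refine this.trans ?_
        rw [act'_def, enc_apply]
        simp only [F0, Equiv.symm_apply_apply, hη]
    · rintro ⟨z, hz, hy⟩
      choose ξ hξ hzξ using hz
      refine ⟨enc fun q => ξ (ε q), fun q => by rw [dec_enc]; exact hξ _, fun i => ?_⟩
      funext n
      rw [hy n]
      have := congrFun (hzξ (ε ((t i)⁻¹ • ε.symm (md n))) (finProdFinEquiv (i, md n))) (n / M)
      rw [act'_def, enc_apply, dec_enc, ← hη]
      exact this
  obtain ⟨k, Z, φ, ⟨F, L, hL⟩, h1, h2, h3, h4⟩ :=
    hsim X' act' ⟨N, t, hX', hact', ht1, htcl, hrep⟩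
  let d : G → H := fun g => ⟨g * r ((g⁻¹ : G) : G ⧸ H), by
    have := QuotientGroup.eq.1 (hr ((g⁻¹ : G) : G ⧸ H)).symm
    rwa [inv_inv] at this⟩
  let D : (H → Q → Fin k) → G → Fin k := fun v g => v (d g) ((g⁻¹ : G) : G ⧸ H)
  have hd : ∀ (h : H) (g : G), d (h * g) = h * d g ∧
      (((h * g : G)⁻¹ : G) : G ⧸ H) = ((g⁻¹ : G) : G ⧸ H) := by
    intro h g
    have e : (((h * g : G)⁻¹ : G) : G ⧸ H) = ((g⁻¹ : G) : G ⧸ H) := by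
      rw [QuotientGroup.eq]; simp
    refine ⟨?_, e⟩
    ext
    simp only [d, e, Subgroup.coe_mul, mul_assoc]
  have hDs : ∀ (h : H) v g, D (fun k => v (h * k)) g = D v (h * g) := by
    intro h v g
    simp only [D]
    rw [(hd h g).1, (hd h g).2]
  have hDshift : ∀ (h : H) v, D (shift h v) = shift (h : G) (D v) := by
    intro h v
    funext g
    have := hDs h⁻¹ v g
    exact this
  have hdec : ∀ g : G, ((d g : H) : G) * (r ((g⁻¹ : G) : G ⧸ H))⁻¹ = g := by
    intro g; simp [d]
  have hDc : Continuous D := by fun_prop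
  refine isFactorOfSFT_of (A := Q → Fin k) {v | D v ∈ Z} (fun v => dec (φ (D v)) o) ?_
    ⟨?_, ?_, ?_, ?_⟩
  · refine isSFT_of _ ((Finset.univ ×ˢ F).image fun p : Q × G => d ((r p.1)⁻¹ * p.2))
      (fun v => ∀ q, (fun f : F => D v ((r q)⁻¹ * f)) ∈ L) ?_ ?_
    · intro x y hxy hx q
      convert hx q using 2 with f
      simp only [D]
      rw [hxy _ (Finset.mem_image.2 ⟨(q, f), by simp, rfl⟩)]
    · intro v
      change D v ∈ Z ↔ _
      rw [hL]
      simp only [hDs]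
      constructor
      · intro h g q
        simpa [mul_assoc] using h (g * (r q)⁻¹)
      · intro h g
        have := h (d g) ((g⁻¹ : G) : G ⧸ H)
        simpa only [← mul_assoc, hdec] using this
  · exact (dec_cont o).comp_continuousOn (h1.comp hDc.continuousOn fun v hv => hv)
  · intro v hv
    exact h2 hv o
  · intro x hx
    have hx' : enc (fun _ => x) ∈ X' := fun q => by rw [dec_enc]; exact hx
    obtain ⟨w, hw, hφ⟩ := h3 hx'
    have e : D (fun h q => w (h * (r q)⁻¹)) = w := by
      funext g
      simp only [D, hdec]
    refine ⟨fun h q => w (h * (r q)⁻¹), ?_, ?_⟩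
    · change D (fun (h : H) q => w (h * (r q)⁻¹)) ∈ Z
      rw [e]; exact hw
    · simp only [e]
      rw [hφ, dec_enc]
  · intro h v hv
    change dec (φ (D (shift h v))) o = _
    rw [hDshift, h4 _ _ hv, act'_def, dec_enc, κ_o, smul_o]

end SelfSim

namespace SelfSim

theorem selfSimulable_of_commensurable
    {G₁ G₂ : Type*} [Group G₁] [Group G₂]
    (hfg₁ : Group.FG G₁)
    (H₁ : Subgroup G₁) (H₂ : Subgroup G₂)
    (hi₁ : H₁.FiniteIndex) (hi₂ : H₂.FiniteIndex)
    (e : ↥H₁ ≃* ↥H₂) (h : SelfSimulable G₁) : SelfSimulable G₂ := by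
  have hH : SelfSimulable H₁ := selfSimulable_subgroup hfg₁ H₁ hi₁ h
  have hHfg : Group.FG H₁ := Subgroup.fg_of_index_ne_zero H₁
  refine selfSimulable_of_hom hHfg (H₂.subtype.comp e.toMonoidHom) ?_ ?_ hH
  · exact H₂.subtype_injective.comp e.injective
  · have : (H₂.subtype.comp e.toMonoidHom).range = H₂ := by
      ext x
      constructor
      · rintro ⟨y, rfl⟩; simp
      · intro hx; exact ⟨e.symm ⟨x, hx⟩, by simp⟩
    rwa [this]

/-- Self-simulability is invariant under commensurability. -/
theorem selfSimulable_iff_of_commensurable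
    (G₁ G₂ : Type*) [Group G₁] [Group G₂]
    (hfg₁ : Group.FG G₁) (hfg₂ : Group.FG G₂)
    (H₁ : Subgroup G₁) (H₂ : Subgroup G₂)
    (hi₁ : H₁.FiniteIndex) (hi₂ : H₂.FiniteIndex)
    (e : ↥H₁ ≃* ↥H₂) :
    SelfSimulable G₁ ↔ SelfSimulable G₂ :=
  ⟨selfSimulable_of_commensurable hfg₁ H₁ H₂ hi₁ hi₂ e,
    selfSimulable_of_commensurable hfg₂ H₂ H₁ hi₂ hi₁ e.symm⟩

end SelfSim
end

section
/- Let Γ₁ and Γ₂ be finitely presented groups which are quasi-isometric. Then Γ₁ is self-simulable if and only if Γ₂ is self-simulable. -/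
open scoped Pointwise

namespace SelfSim
open Nat.Partrec (Code)
open Encodable

/-- A staged form of recursive enumerability. -/
def Sig {α : Type*} [Primcodable α] (p : α → Prop) : Prop :=
  ∃ R : α → ℕ → Prop, PrimrecRel R ∧ (∀ a m n, m ≤ n → R a m → R a n) ∧
    ∀ a, p a ↔ ∃ n, R a n

section sig
variable {α β γ : Type*} [Primcodable α] [Primcodable β] [Primcodable γ]

theorem Sig.of_RE {p : α → Prop} (h : RE p) : Sig p := by
  have h' := h
  unfold RE Partrec at h'
  obtain ⟨c, hc⟩ := Nat.Partrec.Code.exists_code.1 h'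
  refine ⟨fun a n => (Nat.Partrec.Code.evaln n c (encode a)).isSome = true, ?_, ?_, ?_⟩
  · have h1 : Primrec fun x : α × ℕ =>
        (Nat.Partrec.Code.evaln x.2 c (encode x.1)).isSome :=
      Primrec.option_isSome.comp (Nat.Partrec.Code.primrec_evaln.comp
        (Primrec.pair (Primrec.pair Primrec.snd (Primrec.const c))
          (Primrec.encode.comp Primrec.fst)))
    exact (Primrec.eq.comp h1 (Primrec.const true))
  · intro a m n hmn hm
    obtain ⟨x, hx⟩ := Option.isSome_iff_exists.1 hm
    exact Option.isSome_iff_exists.2 ⟨x, Nat.Partrec.Code.evaln_mono hmn hx⟩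
  · intro a
    have e1 := congrFun hc (encode a)
    simp only [encodek] at e1
    constructor
    · intro hp
      have : encode () ∈ c.eval (encode a) := by
        rw [e1]; simp [hp, Part.mem_map_iff]; exact ⟨(), rfl⟩
      obtain ⟨k, hk⟩ := Nat.Partrec.Code.evaln_complete.1 this
      exact ⟨k, Option.isSome_iff_exists.2 ⟨_, hk⟩⟩
    · rintro ⟨n, hn⟩
      obtain ⟨x, hx⟩ := Option.isSome_iff_exists.1 hn
      have := Nat.Partrec.Code.evaln_sound hx
      rw [e1] at this
      simp at this
      exact this.1

theorem Sig.to_RE {p : α → Prop} (h : Sig p) : RE p := by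
  obtain ⟨R, hR, -, hp⟩ := h
  obtain ⟨hd, hR⟩ := hR
  have hd' : ∀ a n, Decidable (R a n) := fun a n => hd (a, n)
  have hR1 : Computable₂ fun a n => decide (R a n) :=
    (hR.of_eq fun x => by simp : Primrec fun x : α × ℕ => decide (R x.1 x.2)).to_comp
  have h2 : Partrec fun a => Nat.rfind (fun n => (Part.some (decide (R a n)) : Part Bool)) := by
    apply Partrec.rfind
    exact Computable₂.partrec₂ hR1
  refine (REPred.of_eq h2.dom_re ?_ : REPred p)
  intro a
  rw [hp a]
  refine Nat.rfind_dom.trans ?_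
  constructor
  · rintro ⟨n, hn, -⟩
    exact ⟨n, by simpa using hn⟩
  · rintro ⟨n, hn⟩
    exact ⟨n, by simpa using hn, fun _ => trivial⟩

theorem Sig.of_prim {p : α → Prop} (h : PrimrecPred p) : Sig p :=
  ⟨fun a _ => p a, h.comp Primrec.fst, fun _ _ _ _ h => h, fun a => by simp⟩

theorem Sig.of_eq {p q : α → Prop} (h : Sig p) (e : ∀ a, p a ↔ q a) : Sig q := by
  rwa [← funext fun a => propext (e a)]

theorem Sig.comp {p : β → Prop} (h : Sig p) {f : α → β} (hf : Primrec f) :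
    Sig fun a => p (f a) := by
  obtain ⟨R, hR, hm, hp⟩ := h
  refine ⟨fun a n => R (f a) n, ?_, fun a => hm (f a), fun a => hp (f a)⟩
  exact hR.comp (hf.comp Primrec.fst) Primrec.snd

theorem Sig.and {p q : α → Prop} (h : Sig p) (h' : Sig q) : Sig fun a => p a ∧ q a := by
  obtain ⟨R, hR, hm, hp⟩ := h
  obtain ⟨R', hR', hm', hp'⟩ := h'
  refine ⟨fun a n => R a n ∧ R' a n, hR.and hR', fun a m n hmn h =>
    ⟨hm a m n hmn h.1, hm' a m n hmn h.2⟩, fun a => ?_⟩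
  show p a ∧ q a ↔ ∃ n, R a n ∧ R' a n
  rw [hp, hp']
  constructor
  · rintro ⟨⟨n, hn⟩, ⟨k, hk⟩⟩
    exact ⟨max n k, hm _ _ _ (le_max_left _ _) hn, hm' _ _ _ (le_max_right _ _) hk⟩
  · rintro ⟨n, h1, h2⟩
    exact ⟨⟨n, h1⟩, ⟨n, h2⟩⟩

theorem Sig.or {p q : α → Prop} (h : Sig p) (h' : Sig q) : Sig fun a => p a ∨ q a := by
  obtain ⟨R, hR, hm, hp⟩ := h
  obtain ⟨R', hR', hm', hp'⟩ := h'
  refine ⟨fun a n => R a n ∨ R' a n, hR.or hR', fun a m n hmn h =>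
    h.imp (hm a m n hmn) (hm' a m n hmn), fun a => ?_⟩
  show p a ∨ q a ↔ ∃ n, R a n ∨ R' a n
  rw [hp, hp', exists_or]

theorem Sig.ex {p : α → β → Prop} (h : Sig fun x : α × β => p x.1 x.2) :
    Sig fun a => ∃ b, p a b := by
  obtain ⟨R, hR, hm, hp⟩ := h
  refine ⟨fun a n => ∃ k < n, ∃ b, b ∈ (decode k : Option β).toList ∧ R (a, b) n, ?_, ?_, ?_⟩
  · have h1 : PrimrecRel fun (b : β) (x : α × ℕ) => R (x.1, b) x.2 :=
      hR.comp (Primrec.pair (Primrec.fst.comp Primrec.snd) Primrec.fst)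
        (Primrec.snd.comp Primrec.snd)
    have h2 := h1.exists_mem_list
    have h3 : PrimrecRel fun (k : ℕ) (x : α × ℕ) =>
        ∃ b ∈ (decode k : Option β).toList, R (x.1, b) x.2 :=
      h2.comp (Primrec.optionToList.comp (Primrec.decode.comp Primrec.fst)) Primrec.snd
    have h4 : PrimrecRel fun (a : α) (n : ℕ) => ∃ k ∈ List.range n,
        ∃ b ∈ (decode k : Option β).toList, R (a, b) n :=
      h3.exists_mem_list.comp (Primrec.list_range.comp Primrec.snd) Primrec.id
    simpa only [List.mem_range] using h4
  · rintro a m n hmn ⟨k, hk, b, hb, hr⟩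
    exact ⟨k, hk.trans_le hmn, b, hb, hm _ _ _ hmn hr⟩
  · intro a
    constructor
    · rintro ⟨b, hb⟩
      obtain ⟨n, hn⟩ := (hp (a, b)).1 hb
      exact ⟨max n (encode b + 1), encode b, by omega, b, by simp, hm _ _ _ (le_max_left _ _) hn⟩
    · rintro ⟨n, k, hk, b, hb, hr⟩
      exact ⟨b, (hp (a, b)).2 ⟨n, hr⟩⟩

theorem Sig.all_mem {p : α → β → Prop} (h : Sig fun x : α × β => p x.1 x.2)
    {L : α → List β} (hL : Primrec L) : Sig fun a => ∀ b ∈ L a, p a b := by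
  obtain ⟨R, hR, hm, hp⟩ := h
  refine ⟨fun a n => ∀ b ∈ L a, R (a, b) n, ?_, ?_, ?_⟩
  · have h1 : PrimrecRel fun (b : β) (x : α × ℕ) => R (x.1, b) x.2 :=
      hR.comp (Primrec.pair (Primrec.fst.comp Primrec.snd) Primrec.fst)
        (Primrec.snd.comp Primrec.snd)
    exact h1.forall_mem_list.comp (hL.comp Primrec.fst) Primrec.id
  · intro a m n hmn h b hb
    exact hm _ _ _ hmn (h b hb)
  · intro a
    constructor
    · intro H
      have : ∀ l : List β, (∀ b ∈ l, p a b) → ∃ n, ∀ b ∈ l, R (a, b) n := by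
        intro l
        induction l with
        | nil => intro _; exact ⟨0, by simp⟩
        | cons b l ih =>
          intro hl
          obtain ⟨n, hn⟩ := ih fun b' hb' => hl b' (List.mem_cons_of_mem _ hb')
          obtain ⟨k, hk⟩ := (hp (a, b)).1 (hl b List.mem_cons_self)
          refine ⟨max n k, ?_⟩
          intro b' hb'
          rcases List.mem_cons.1 hb' with rfl | hb'
          · exact hm _ _ _ (le_max_right _ _) hk
          · exact hm _ _ _ (le_max_left _ _) (hn b' hb')
      exact this _ H
    · rintro ⟨n, hn⟩ b hb
      exact (hp (a, b)).2 ⟨n, hn b hb⟩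
end sig
end SelfSim

namespace SelfSim
open Encodable

/-- Finite partial patterns on `ℕ × Fin M`. -/
abbrev Pat (M : ℕ) := List ((ℕ × Fin M) × Bool)

/-- `y` agrees with the pattern `c`. -/
def Matches {M : ℕ} (y : ℕ → Fin M → Bool) (c : Pat M) : Prop :=
  ∀ q ∈ c, y q.1.1 q.1.2 = q.2

/-- The set of sequences matching no pattern of `C`. -/
def Avoid {M : ℕ} (C : Pat M → Prop) : Set (ℕ → Fin M → Bool) :=
  {y | ∀ c, C c → ¬ Matches y c}

/-- All words of length `N` over the alphabet `Fin M → Bool`. -/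
noncomputable def wordsOf (M : ℕ) : ℕ → List (List (Fin M → Bool))
  | 0 => [[]]
  | N + 1 => (wordsOf M N).flatMap fun u =>
      (Finset.univ : Finset (Fin M → Bool)).toList.map fun a => a :: u

theorem mem_wordsOf {M : ℕ} : ∀ (N : ℕ) (u : List (Fin M → Bool)),
    u ∈ wordsOf M N ↔ u.length = N
  | 0, u => by simp [wordsOf]
  | N + 1, u => by
    simp only [wordsOf, List.mem_flatMap, mem_wordsOf N, List.mem_map, Finset.mem_toList,
      Finset.mem_univ, true_and]
    constructor
    · rintro ⟨v, hv, a, rfl⟩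
      simp [hv]
    · intro hu
      cases u with
      | nil => simp at hu
      | cons a v => exact ⟨v, by simpa using hu, a, rfl⟩

theorem primrec_wordsOf (M : ℕ) : Primrec (wordsOf M) := by
  have h : Primrec₂ fun (_ : ℕ) (L : List (List (Fin M → Bool))) => L.flatMap fun u =>
      (Finset.univ : Finset (Fin M → Bool)).toList.map fun a => a :: u := by
    refine Primrec.list_flatMap Primrec.snd ?_
    refine Primrec.list_map (Primrec.const _) ?_
    exact Primrec.list_cons.comp Primrec.snd (Primrec.snd.comp Primrec.fst)
  refine (Primrec.nat_rec₁ [[]] h).of_eq ?_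
  intro n
  induction n with
  | zero => rfl
  | succ n ih => simp only [wordsOf]; rw [← ih]

/-- The word `w` determines a match of the pattern `c`. -/
def WordMatches {M : ℕ} (w : List (Fin M → Bool)) (c : Pat M) : Prop :=
  ∀ q ∈ c, (w[q.1.1]?).map (fun a => a q.1.2) = some q.2

theorem prim_wordMatches (M : ℕ) :
    PrimrecRel fun (c : Pat M) (w : List (Fin M → Bool)) => WordMatches w c := by
  have h1 : PrimrecRel fun (q : (ℕ × Fin M) × Bool) (w : List (Fin M → Bool)) =>
      (w[q.1.1]?).map (fun a => a q.1.2) = some q.2 := by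
    refine Primrec.eq.comp ?_ (Primrec.option_some.comp (Primrec.snd.comp Primrec.fst))
    refine Primrec.option_map (Primrec.list_getElem?.comp Primrec.snd
      (Primrec.fst.comp (Primrec.fst.comp Primrec.fst))) ?_
    exact Primrec.fin_app.comp Primrec.snd
      (Primrec.snd.comp (Primrec.fst.comp (Primrec.fst.comp Primrec.fst)))
  exact h1.forall_mem_list

theorem isOpen_matches {M : ℕ} (c : Pat M) : IsOpen {y : ℕ → Fin M → Bool | Matches y c} := by
  have : {y : ℕ → Fin M → Bool | Matches y c} =
      ⋂ q ∈ c.toFinset, {y | y q.1.1 q.1.2 = q.2} := by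
    ext y; simp [Matches]
  rw [this]
  refine isOpen_biInter_finset fun q _ => ?_
  exact (isOpen_discrete ({q.2} : Set Bool)).preimage (by fun_prop :
    Continuous fun y : ℕ → Fin M → Bool => y q.1.1 q.1.2)

theorem isClosed_avoid {M : ℕ} (C : Pat M → Prop) : IsClosed (Avoid C) := by
  have : Avoid C = ⋂ (c) (_ : C c), {y | Matches y c}ᶜ := by
    ext y; simp [Avoid]
  rw [this]
  exact isClosed_iInter fun c => isClosed_iInter fun _ => (isOpen_matches c).isClosed_compl

theorem wordMatches_of_extends {M : ℕ} {y : ℕ → Fin M → Bool} {w : List (Fin M → Bool)}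
    (hy : ExtendsWord y w) {c : Pat M} (h : WordMatches w c) : Matches y c := by
  intro q hq
  have := h q hq
  rw [Option.map_eq_some_iff] at this
  obtain ⟨a, ha, hq⟩ := this
  obtain ⟨hl, rfl⟩ := List.getElem?_eq_some_iff.1 ha
  rw [← hq]
  exact congrFun (hy ⟨_, hl⟩) _

theorem isClosed_extends {A : Type*} [TopologicalSpace A] [DiscreteTopology A] (w : List A) :
    IsClopen {y : ℕ → A | ExtendsWord y w} := by
  have : {y : ℕ → A | ExtendsWord y w} = ⋂ i : Fin w.length, {y | y i = w.get i} := by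
    ext y; simp [ExtendsWord]
  rw [this]
  refine isClopen_iInter_of_finite fun i => ?_
  exact (isClopen_discrete ({w.get i} : Set A)).preimage (by fun_prop :
    Continuous fun y : ℕ → A => y i)

theorem effClosed_avoid {M : ℕ} {C : Pat M → Prop} (hC : Sig C) :
    EffectivelyClosedSet (Avoid C) := by
  refine ⟨isClosed_avoid C, ?_⟩
  have key : Sig fun w : List (Fin M → Bool) =>
      ∃ N : ℕ, ∀ u ∈ wordsOf M N, ∃ c, C c ∧ WordMatches (w ++ u) c := by
    refine Sig.ex ?_
    refine Sig.all_mem (p := fun (x : List (Fin M → Bool) × ℕ) u =>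
      ∃ c, C c ∧ WordMatches (x.1 ++ u) c) ?_ ((primrec_wordsOf M).comp Primrec.snd)
    refine Sig.ex ?_
    refine Sig.and (hC.comp Primrec.snd) (Sig.of_prim ?_)
    exact (prim_wordMatches M).comp Primrec.snd
      (Primrec.list_append.comp (Primrec.fst.comp (Primrec.fst.comp Primrec.fst))
        (Primrec.snd.comp Primrec.fst))
  refine (key.of_eq ?_).to_RE
  intro w
  constructor
  · rintro ⟨N, hN⟩ y hy hyA
    have hu : (List.ofFn fun i : Fin N => y (w.length + i)) ∈ wordsOf M N := by
      rw [mem_wordsOf]; simp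
    obtain ⟨c, hc, hm⟩ := hN _ hu
    refine hyA c hc (wordMatches_of_extends ?_ hm)
    rintro ⟨i, hi⟩
    simp only [List.get_eq_getElem, List.getElem_append]
    split
    · rename_i h
      exact hy ⟨i, h⟩
    · rename_i h
      simp only [List.getElem_ofFn]
      congr 1; omega
  · intro H
    let U : ℕ → Set (ℕ → Fin M → Bool) := fun N =>
      {y | ∃ c, C c ∧ (∀ q ∈ c, q.1.1 < N) ∧ Matches y c}
    have hU : ∀ N, IsOpen (U N) := by
      intro N
      have : U N = ⋃ (c) (_ : C c ∧ ∀ q ∈ c, q.1.1 < N), {y | Matches y c} := by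
        ext y; simp [U, and_assoc]
      rw [this]
      exact isOpen_iUnion fun c => isOpen_iUnion fun _ => isOpen_matches c
    have hmono : Monotone U := by
      rintro a b hab y ⟨c, hc, hl, hm⟩
      exact ⟨c, hc, fun q hq => (hl q hq).trans_le hab, hm⟩
    have hcpt : IsCompact {y : ℕ → Fin M → Bool | ExtendsWord y w} :=
      (isClosed_extends w).1.isCompact
    obtain ⟨N, hN⟩ := hcpt.elim_directed_cover U hU (by
      intro y hy
      have := H y hy
      simp only [Avoid, Set.mem_ofPred_eq, not_forall, not_not] at this
      obtain ⟨c, hc, hm⟩ := this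
      refine Set.mem_iUnion.2 ⟨(c.map fun q => q.1.1 + 1).sum, c, hc, ?_, hm⟩
      intro q hq
      have : q.1.1 + 1 ≤ (c.map fun q => q.1.1 + 1).sum :=
        List.single_le_sum (by simp) _ (List.mem_map.2 ⟨q, hq, rfl⟩)
      omega) hmono.directed_le
    refine ⟨N, ?_⟩
    intro u hu
    rw [mem_wordsOf] at hu
    obtain ⟨c, hc, hl, hm⟩ := hN (show (fun n => (w ++ u).getD n (fun _ => false)) ∈ _ by
      rintro ⟨i, hi⟩
      simp [List.getElem?_append_left hi, hi])
    refine ⟨c, hc, ?_⟩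
    intro q hq
    have h1 := hl q hq
    have h2 : q.1.1 < (w ++ u).length := by simp; omega
    have h3 := hm q hq
    rw [List.getElem?_eq_getElem h2]
    simp only [List.getD_eq_getElem _ _ h2] at h3
    simpa using h3

/-- Sets defined by a recursively enumerable set of forbidden patterns. -/
def EC {M : ℕ} (Z : Set (ℕ → Fin M → Bool)) : Prop := ∃ C : Pat M → Prop, Sig C ∧ Z = Avoid C

theorem EC.effClosed {M : ℕ} {Z : Set (ℕ → Fin M → Bool)} (h : EC Z) :
    EffectivelyClosedSet Z := by
  obtain ⟨C, hC, rfl⟩ := h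
  exact effClosed_avoid hC

theorem EC.inter {M : ℕ} {Z Z' : Set (ℕ → Fin M → Bool)} (h : EC Z) (h' : EC Z') :
    EC (Z ∩ Z') := by
  obtain ⟨C, hC, rfl⟩ := h
  obtain ⟨C', hC', rfl⟩ := h'
  refine ⟨fun c => C c ∨ C' c, hC.or hC', ?_⟩
  ext y
  simp only [Avoid, Set.mem_inter_iff, Set.mem_ofPred_eq]
  constructor
  · rintro ⟨h1, h2⟩ c (h | h)
    · exact h1 c h
    · exact h2 c h
  · intro h
    exact ⟨fun c hc => h c (Or.inl hc), fun c hc => h c (Or.inr hc)⟩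

theorem EC.family {M : ℕ} {K : Type*} [Primcodable K] {P : K → Prop} (hP : Sig P)
    {F : K → Pat M} (hF : Primrec F) :
    EC {y : ℕ → Fin M → Bool | ∀ k, P k → ¬ Matches y (F k)} := by
  refine ⟨fun c => ∃ k, P k ∧ F k = c, ?_, ?_⟩
  · refine Sig.ex ?_
    exact (hP.comp Primrec.snd).and (Sig.of_prim (Primrec.eq.comp (hF.comp Primrec.snd)
      Primrec.fst))
  · ext y
    simp only [Avoid, Set.mem_ofPred_eq]
    constructor
    · rintro h c ⟨k, hk, rfl⟩
      exact h k hk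
    · intro h k hk
      exact h _ ⟨k, hk, rfl⟩

/-- Conditional equality of coordinates. -/
theorem EC.condEq {M : ℕ} {K : Type*} [Primcodable K] {L : K → Pat M} {a b : K → ℕ × Fin M}
    (hL : Primrec L) (ha : Primrec a) (hb : Primrec b) :
    EC {y : ℕ → Fin M → Bool | ∀ k, Matches y (L k) →
      y (a k).1 (a k).2 = y (b k).1 (b k).2} := by
  have h : EC {y : ℕ → Fin M → Bool | ∀ x : K × Bool, True →
      ¬ Matches y ((a x.1, x.2) :: (b x.1, !x.2) :: L x.1)} := by
    refine EC.family (Sig.of_prim (PrimrecPred.of_eq (Primrec.eq.comp (Primrec.const 0)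
      (Primrec.const 0)) (by simp))) ?_
    refine Primrec.list_cons.comp ?_ (Primrec.list_cons.comp ?_ ?_)
    · exact (ha.comp Primrec.fst).pair Primrec.snd
    · exact (hb.comp Primrec.fst).pair (Primrec.not.comp Primrec.snd)
    · exact hL.comp Primrec.fst
  convert h using 1
  ext y
  simp only [Set.mem_ofPred_eq, Matches, List.mem_cons, true_imp_iff]
  constructor
  · rintro h ⟨k, v⟩ hm
    have h1 := h k fun q hq => hm q (Or.inr (Or.inr hq))
    have h2 := hm _ (Or.inl rfl)
    have h3 := hm _ (Or.inr (Or.inl rfl))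
    simp_all
  · intro h k hk
    by_contra hne
    refine h (k, y (a k).1 (a k).2) ?_
    rintro q (rfl | rfl | hq)
    · rfl
    · simp only
      revert hne
      cases y (a k).1 (a k).2 <;> cases y (b k).1 (b k).2 <;> simp
    · exact hk q hq

theorem EC.eqs {M : ℕ} {K : Type*} [Primcodable K] {a b : K → ℕ × Fin M}
    (ha : Primrec a) (hb : Primrec b) :
    EC {y : ℕ → Fin M → Bool | ∀ k, y (a k).1 (a k).2 = y (b k).1 (b k).2} := by
  have := EC.condEq (L := fun _ : K => []) (Primrec.const _) ha hb
  simpa [Matches] using this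

/-- An effectively closed set is recovered from its forbidden words. -/
theorem EffectivelyClosedSet.mem_iff {A : Type*} [Primcodable A] [TopologicalSpace A]
    [DiscreteTopology A] {Z : Set (ℕ → A)} (h : EffectivelyClosedSet Z) (y : ℕ → A) :
    y ∈ Z ↔ ∀ w : List A, (∀ x, ExtendsWord x w → x ∉ Z) → ¬ ExtendsWord y w := by
  constructor
  · intro hy w hw hyw
    exact hw y hyw hy
  · intro H
    by_contra hy
    have ho : IsOpen Zᶜ := h.1.isOpen_compl
    obtain ⟨I, u, hu, hs⟩ := isOpen_pi_iff.1 ho y hy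
    obtain ⟨N, hN⟩ : ∃ N, ∀ i ∈ I, i < N := ⟨I.sup id + 1, fun i hi =>
      Nat.lt_succ_of_le (Finset.le_sup (f := id) hi)⟩
    refine H (List.ofFn fun i : Fin N => y i) ?_ ?_
    · intro x hx
      refine hs ?_
      intro i hi
      have := hx ⟨i, by simpa using hN i hi⟩
      simp at this
      rw [this]
      exact (hu i hi).2
    · rintro ⟨i, hi⟩
      simp
end SelfSim

open scoped Pointwise
namespace SelfSim

/-- Evaluation of extended letters. -/
def evL {G : Type*} [Group G] {m : ℕ} (f : FreeGroup (Fin m) →* G) :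
    Option (Fin m × Bool) → G
  | none => 1
  | some p => f (FreeGroup.mk [p])

theorem evL_word {G : Type*} [Group G] {m : ℕ} (f : FreeGroup (Fin m) →* G)
    (w : List (Option (Fin m × Bool))) :
    (w.map (evL f)).prod = f (FreeGroup.mk w.reduceOption) := by
  induction w with
  | nil =>
    simp only [List.map_nil, List.prod_nil, List.reduceOption_nil]
    exact (map_one f).symm
  | cons a w ih =>
    cases a with
    | none => simp [evL, ih]
    | some p =>
      simp only [List.map_cons, List.prod_cons, ih, evL, List.reduceOption_cons_of_some]
      rw [← map_mul, FreeGroup.mul_mk]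
      rfl

theorem fp_aux {G : Type*} [Group G] {m : ℕ} (f : FreeGroup (Fin m) →* G)
    (R : Finset (FreeGroup (Fin m)))
    (hker : f.ker = Subgroup.normalClosure (R : Set (FreeGroup (Fin m))))
    (F : List (Option (Fin m × Bool)) → Prop)
    (h0 : ∀ u v, F (u ++ [none] ++ v) ↔ F (u ++ v))
    (h1 : ∀ p : Fin m × Bool, ∀ u v, F (u ++ [some p, some (p.1, !p.2)] ++ v) ↔ F (u ++ v))
    (h2 : ∀ r ∈ R, ∀ u v, F (u ++ r.toWord.map some ++ v) ↔ F (u ++ v))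
    (w w' : List (Option (Fin m × Bool)))
    (hw : (w.map (evL f)).prod = (w'.map (evL f)).prod) : F w ↔ F w' := by
  have strip : ∀ w u, F (u ++ w) ↔ F (u ++ w.reduceOption.map some) := by
    intro w
    induction w with
    | nil => simp
    | cons a w ih =>
      intro u
      cases a with
      | none =>
        have := h0 u w
        simp only [List.append_assoc, List.singleton_append] at this
        rw [this, ih]; simp
      | some p =>
        have := ih (u ++ [some p])
        simpa using this
  have strip' : ∀ w, F w ↔ F (w.reduceOption.map some) := fun w => by simpa using strip w []
  let F' : FreeGroup (Fin m) → Prop := Quot.lift (fun v => F (v.map some)) (by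
    rintro a b ⟨⟩
    rename_i L₁ L₂ x c
    have := h1 (x, c) (L₁.map some) (L₂.map some)
    simpa using this)
  have hF' : ∀ v, F' (FreeGroup.mk v) = F (v.map some) := fun v => rfl
  let N : Subgroup (FreeGroup (Fin m)) :=
    { carrier := {n | ∀ u v, F' (u * n * v) ↔ F' (u * v)}
      one_mem' := by intro u v; simp
      mul_mem' := by
        intro a b ha hb u v
        have e : u * (a * b) * v = (u * a) * b * v := by group
        rw [e, hb, mul_assoc u a v, ← mul_assoc u a v, ha]
      inv_mem' := by
        intro a ha u v
        rw [← ha (u * a⁻¹) v]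
        simp }
  have hN : N.Normal := ⟨by
    intro n hn g u v
    have e : u * (g * n * g⁻¹) * v = (u * g) * n * (g⁻¹ * v) := by group
    rw [e, hn]
    have e : u * g * (g⁻¹ * v) = u * v := by group
    rw [e]⟩
  have hle : Subgroup.normalClosure (R : Set (FreeGroup (Fin m))) ≤ N := by
    refine Subgroup.normalClosure_le_normal ?_
    intro r hr u v
    have := h2 r hr (u.toWord.map some) (v.toWord.map some)
    rw [← List.map_append, ← List.map_append, ← List.map_append, ← hF', ← hF',
      ← FreeGroup.mul_mk, ← FreeGroup.mul_mk, ← FreeGroup.mul_mk, FreeGroup.mk_toWord,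
      FreeGroup.mk_toWord, FreeGroup.mk_toWord] at this
    exact this
  rw [strip' w, strip' w', ← hF', ← hF']
  rw [evL_word, evL_word] at hw
  have hk : (FreeGroup.mk w.reduceOption)⁻¹ * FreeGroup.mk w'.reduceOption ∈ N := by
    apply hle
    rw [← hker, MonoidHom.mem_ker, map_mul, map_inv, hw, inv_mul_cancel]
  have := hk (FreeGroup.mk w.reduceOption) 1
  simp only [mul_one, mul_inv_cancel_left] at this
  exact this.symm

theorem fp_data {G : Type*} [Group G] (hp : FinitelyPresentedGroup G) :
    ∃ (M : ℕ) (s : Fin M → G) (i0 : Fin M) (R : ℕ) (rel : Fin R → List (Fin M)),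
      s i0 = 1 ∧ (∀ g, ∃ w : List (Fin M), (w.map s).prod = g) ∧
      (∀ r, ((rel r).map s).prod = 1) ∧
      ∀ F : List (Fin M) → Prop, (∀ r u v, F (u ++ rel r ++ v) ↔ F (u ++ v)) →
        ∀ w w', (w.map s).prod = (w'.map s).prod → (F w ↔ F w') := by
  classical
  obtain ⟨m, f, R, hsurj, hker⟩ := hp
  let e := Fintype.equivFin (Option (Fin m × Bool))
  let S : Finset (List (Option (Fin m × Bool))) :=
    {[none]} ∪ Finset.univ.image (fun p : Fin m × Bool => [some p, some (p.1, !p.2)]) ∪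
      R.image (fun r => r.toWord.map some)
  let eS := S.equivFin
  have hS1 : ∀ l ∈ S, (l.map (evL f)).prod = 1 := by
    intro l hl
    simp only [S, Finset.mem_union, Finset.mem_singleton, Finset.mem_image, Finset.mem_univ,
      true_and] at hl
    rw [evL_word]
    rcases hl with (rfl | ⟨p, rfl⟩) | ⟨r, hr, rfl⟩
    · exact map_one f
    · have : FreeGroup.mk [p, (p.1, !p.2)] = 1 := by
        refine Quot.sound ?_
        exact FreeGroup.Red.Step.not (L₁ := []) (L₂ := [])
      simp [List.reduceOption, this]
    · have hr' : r ∈ f.ker := hker ▸ Subgroup.subset_normalClosure hr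
      have e1 : (List.map some r.toWord).reduceOption = r.toWord := by
        simp [List.reduceOption]
      rw [e1, FreeGroup.mk_toWord]
      exact hr'
  refine ⟨_, fun i => evL f (e.symm i), e none, S.card, fun r => (eS.symm r).1.map e, ?_, ?_,
    ?_, ?_⟩
  · simp [evL]
  · intro g
    obtain ⟨x, rfl⟩ := hsurj g
    refine ⟨(x.toWord.map some).map e, ?_⟩
    rw [List.map_map]
    have : ((fun i => evL f (e.symm i)) ∘ e) = evL f := by ext; simp
    rw [this, evL_word]
    have e1 : (List.map some x.toWord).reduceOption = x.toWord := by
      simp [List.reduceOption]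
    rw [e1, FreeGroup.mk_toWord]
  · intro r
    rw [List.map_map]
    have : ((fun i => evL f (e.symm i)) ∘ e) = evL f := by ext; simp
    rw [this]
    exact hS1 _ (eS.symm r).2
  · intro F hF w w' hw
    have hF2 : ∀ l ∈ S, ∀ u v, F ((u ++ l ++ v).map e) ↔ F ((u ++ v).map e) := by
      intro l hl u v
      have := hF (eS ⟨l, hl⟩) (u.map e) (v.map e)
      simpa using this
    have := fp_aux f R hker (fun l => F (l.map e))
      (hF2 _ (by simp [S]))
      (fun p => hF2 _ (by simp [S]))
      (fun r hr => hF2 _ (by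
        simp only [S, Finset.mem_union, Finset.mem_image]
        exact Or.inr ⟨r, hr, rfl⟩))
      (w.map e.symm) (w'.map e.symm) (by
        rw [List.map_map, List.map_map]; exact hw)
    simpa using this

/-- Coarse equivalence data between two groups. -/
structure Coarse (G H : Type*) [Group G] [Group H] where
  f : H → G
  f' : G → H
  hf : ∀ t, (Set.range fun h => (f h)⁻¹ * f (h * t)).Finite
  hf' : ∀ t, (Set.range fun g => (f' g)⁻¹ * f' (g * t)).Finite
  hff' : (Set.range fun g => (f (f' g))⁻¹ * g).Finite
  hf'f : (Set.range fun h => (f' (f h))⁻¹ * h).Finite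

/-- The inverse coarse equivalence. -/
def Coarse.symm {G H : Type*} [Group G] [Group H] (c : Coarse G H) : Coarse H G :=
  ⟨c.f', c.f, c.hf', c.hf, c.hf'f, c.hff'⟩

theorem exists_word {G : Type*} [Group G] {m : ℕ} {s : Fin m → G}
    (hs : Submonoid.closure (Set.range s) = ⊤) (g : G) :
    ∃ w : List (Fin m), (w.map s).prod = g := by
  have : g ∈ Submonoid.closure (Set.range s) := by rw [hs]; trivial
  induction this using Submonoid.closure_induction with
  | mem x hx => obtain ⟨i, rfl⟩ := hx; exact ⟨[i], by simp⟩
  | one => exact ⟨[], by simp⟩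
  | mul x y _ _ hx hy =>
    obtain ⟨u, rfl⟩ := hx
    obtain ⟨v, rfl⟩ := hy
    exact ⟨u ++ v, by simp⟩

theorem closure_of_words {G : Type*} [Group G] {m : ℕ} {s : Fin m → G}
    (hs : ∀ g, ∃ w : List (Fin m), (w.map s).prod = g) :
    Submonoid.closure (Set.range s) = ⊤ := by
  rw [eq_top_iff]
  intro g _
  obtain ⟨w, rfl⟩ := hs g
  refine Submonoid.list_prod_mem _ ?_
  intro x hx
  obtain ⟨i, -, rfl⟩ := List.mem_map.1 hx
  exact Submonoid.subset_closure ⟨i, rfl⟩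

theorem ball_finite {G : Type*} [Group G] {m : ℕ} {s : Fin m → G}
    (hs : Submonoid.closure (Set.range s) = ⊤) (r : ℝ) :
    {g : G | (wordDist s 1 g : ℝ) ≤ r}.Finite := by
  obtain ⟨n, hn⟩ := exists_nat_ge r
  have : {g : G | (wordDist s 1 g : ℝ) ≤ r} ⊆
      (fun w : List (Fin m) => (w.map s).prod) '' {w | w.length ≤ n} := by
    intro g hg
    have h1 : {n : ℕ | ∃ w : List (Fin m), w.length = n ∧ (w.map s).prod = 1⁻¹ * g}.Nonempty := by
      obtain ⟨w, hw⟩ := exists_word hs g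
      exact ⟨_, w, rfl, by simpa using hw⟩
    obtain ⟨w, hl, hw⟩ := Nat.sInf_mem h1
    refine ⟨w, ?_, by simpa using hw⟩
    have h2 : (wordDist s 1 g : ℝ) ≤ n := le_trans hg hn
    have h3 : wordDist s 1 g ≤ n := by exact_mod_cast h2
    show w.length ≤ n
    rw [hl]; exact h3
  refine Set.Finite.subset (Set.Finite.image _ ?_) this
  exact List.finite_length_le _ _

theorem wordDist_eq {G : Type*} [Group G] {m : ℕ} (s : Fin m → G) (g h : G) :
    wordDist s g h = wordDist s 1 (g⁻¹ * h) := by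
  simp [wordDist]

theorem coarse_of_qi {G₁ G₂ : Type*} [Group G₁] [Group G₂] (h : QuasiIsometric G₁ G₂) :
    Nonempty (Coarse G₁ G₂) := by
  obtain ⟨m₁, s₁, m₂, s₂, hs₁, hs₂, f, A, B, C, hA, hB, hC, hqi, hd⟩ := h
  choose f' hf' using hd
  have hA0 : 0 < A := by linarith
  have low : ∀ x y : G₂, (wordDist s₂ 1 (x⁻¹ * y) : ℝ) ≤
      A * (wordDist s₁ 1 ((f x)⁻¹ * f y) + B) := by
    intro x y
    have := (hqi x y).1
    rw [wordDist_eq s₂, wordDist_eq s₁] at this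
    have h2 : (1 / A) * (wordDist s₂ 1 (x⁻¹ * y) : ℝ) ≤ wordDist s₁ 1 ((f x)⁻¹ * f y) + B := by
      linarith
    have h3 := mul_le_mul_of_nonneg_left h2 hA0.le
    have h4 : A * ((1 / A) * (wordDist s₂ 1 (x⁻¹ * y) : ℝ)) = wordDist s₂ 1 (x⁻¹ * y) := by
      field_simp
    linarith
  have hE : (Set.range fun g => g⁻¹ * f (f' g)).Finite := by
    refine (ball_finite hs₁ C).subset ?_
    rintro _ ⟨g, rfl⟩
    have := hf' g
    rw [wordDist_eq] at this
    exact this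
  have hff' : (Set.range fun g => (f (f' g))⁻¹ * g).Finite := by
    refine (hE.inv).subset ?_
    rintro _ ⟨g, rfl⟩
    exact Set.mem_inv.2 ⟨g, by simp⟩
  refine ⟨⟨f, f', ?_, ?_, hff', ?_⟩⟩
  · intro t
    refine (ball_finite hs₁ (A * wordDist s₂ 1 t + B)).subset ?_
    rintro _ ⟨h, rfl⟩
    have := (hqi h (h * t)).2
    rw [wordDist_eq s₁, wordDist_eq s₂] at this
    simpa using this
  · intro t
    have hfin : ((Set.range fun g => (f (f' g))⁻¹ * g) * {t} *
        (Set.range fun g => g⁻¹ * f (f' g))).Finite :=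
      (hff'.mul (Set.finite_singleton t)).mul hE
    obtain ⟨D, hD⟩ : ∃ D : ℝ, ∀ x ∈ ((Set.range fun g => (f (f' g))⁻¹ * g) * {t} *
        (Set.range fun g => g⁻¹ * f (f' g))), (wordDist s₁ 1 x : ℝ) ≤ D := by
      obtain ⟨D, hD⟩ := (hfin.image fun x => (wordDist s₁ 1 x : ℝ)).bddAbove
      exact ⟨D, fun x hx => hD ⟨x, hx, rfl⟩⟩
    refine (ball_finite hs₂ (A * (D + B))).subset ?_
    rintro _ ⟨g, rfl⟩
    refine (low _ _).trans ?_
    refine mul_le_mul_of_nonneg_left ?_ hA0.le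
    have := hD ((f (f' g))⁻¹ * f (f' (g * t))) (by
      refine Set.mem_mul.2 ⟨(f (f' g))⁻¹ * g * t, ?_, (g * t)⁻¹ * f (f' (g * t)), ⟨_, rfl⟩, ?_⟩
      · exact Set.mem_mul.2 ⟨_, ⟨g, rfl⟩, t, rfl, rfl⟩
      · group)
    linarith
  · have : (Set.range fun h => h⁻¹ * f' (f h)).Finite := by
      refine (ball_finite hs₂ (A * (C + B))).subset ?_
      rintro _ ⟨h, rfl⟩
      refine (low _ _).trans ?_
      refine mul_le_mul_of_nonneg_left ?_ hA0.le
      have := hf' (f h)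
      rw [wordDist_eq] at this
      linarith
    refine this.inv.subset ?_
    rintro _ ⟨g, rfl⟩
    exact Set.mem_inv.2 ⟨g, by simp⟩
end SelfSim

namespace SelfSim
open Encodable

/-- Index set of the bits stored at each group element. -/
abbrev QI (m J : ℕ) := (List (Fin m) × ℕ) ⊕ Fin J

section coding
variable {G H : Type*} [Group G] [Group H] {M m J R : ℕ}

/-- Configurations over `G` recording a point of `X` with its orbit at each group element,
together with relation bits. -/
def YC (s : Fin M → G) (s' : Fin m → H) (act : H → (ℕ → Bool) → ℕ → Bool) (X : Set (ℕ → Bool))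
    (aw bw : Fin J → List (Fin m)) (tw : Fin J → List (Fin M)) : Set (G → QI m J → Bool) :=
  {c | (∀ g, ∃ x ∈ X, ∀ e n, c g (Sum.inl (e, n)) = act (e.map s').prod x n) ∧
    ∀ g j, c g (Sum.inr j) = true → ∀ n,
      c g (Sum.inl (aw j, n)) = c (g * ((tw j).map s).prod) (Sum.inl (bw j, n))}

/-- Coding of configurations as binary sequences. -/
def emb (s : Fin M → G) (c : G → QI m J → Bool) : ℕ → Bool := fun n =>
  ((decode n : Option (List (Fin M) × QI m J)).map fun p => c (p.1.map s).prod p.2).getD false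

/-- Decoding of configurations. -/
def unemb (sec : G → List (Fin M)) (y : ℕ → Bool) : G → QI m J → Bool :=
  fun g q => y (encode (sec g, q))

theorem emb_encode (s : Fin M → G) (c : G → QI m J → Bool) (w : List (Fin M)) (q : QI m J) :
    emb s c (encode (w, q)) = c (w.map s).prod q := by
  simp [emb]

theorem unemb_emb {s : Fin M → G} {sec : G → List (Fin M)}
    (hsec : ∀ g, ((sec g).map s).prod = g) (c : G → QI m J → Bool) :
    unemb sec (emb s c) = c := by
  funext g q
  rw [unemb, emb_encode, hsec]

theorem shift_mul {A : Type*} (g h : G) (x : G → A) : shift (g * h) x = shift g (shift h x) := by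
  funext k; simp [shift, mul_assoc]

theorem shift_one {A : Type*} (x : G → A) : shift 1 x = x := by
  funext k; simp [shift]

/-- The `G`-action on coded configurations. -/
def actY (m J : ℕ) (s : Fin M → G) (sec : G → List (Fin M)) (g : G) (y : ℕ → Bool) : ℕ → Bool :=
  emb s (shift g (unemb (m := m) (J := J) sec y))

theorem YC_shift {s : Fin M → G} {s' : Fin m → H} {act : H → (ℕ → Bool) → ℕ → Bool}
    {X : Set (ℕ → Bool)} {aw bw : Fin J → List (Fin m)} {tw : Fin J → List (Fin M)}
    {c : G → QI m J → Bool} (hc : c ∈ YC s s' act X aw bw tw) (g : G) :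
    shift g c ∈ YC s s' act X aw bw tw := by
  refine ⟨fun k => hc.1 (g⁻¹ * k), fun k j hj n => ?_⟩
  have := hc.2 (g⁻¹ * k) j hj n
  simpa [shift, mul_assoc] using this

theorem actY_action {s : Fin M → G} {sec : G → List (Fin M)}
    (hsec : ∀ g, ((sec g).map s).prod = g) {s' : Fin m → H} {act : H → (ℕ → Bool) → ℕ → Bool}
    {X : Set (ℕ → Bool)} {aw bw : Fin J → List (Fin m)} {tw : Fin J → List (Fin M)} :
    IsActionOn (actY m J s sec) (emb s '' YC s s' act X aw bw tw) := by
  refine ⟨?_, ?_, ?_⟩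
  · rintro g _ ⟨c, hc, rfl⟩
    rw [actY, unemb_emb hsec]
    exact ⟨_, YC_shift hc g, rfl⟩
  · rintro _ ⟨c, hc, rfl⟩
    rw [actY, unemb_emb hsec, shift_one]
  · rintro g h _ ⟨c, hc, rfl⟩
    simp only [actY, unemb_emb hsec, shift_mul]

/-- The pattern stating that the orbit data at `(w, e)` extends the word `wd`. -/
def orbPat (i0 : Fin M) (J : ℕ) (k : List (Fin M) × List (Fin m) × List (Fin m → Bool)) : Pat M :=
  (List.range k.2.2.length).flatMap fun n => (List.finRange m).map fun i =>
    ((encode ((k.1, Sum.inl (i :: k.2.1, n)) : List (Fin M) × QI m J), i0),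
      (k.2.2.getD n (fun _ => false)) i)

theorem primrec_orbPat (i0 : Fin M) (J : ℕ) : Primrec (orbPat (m := m) i0 J) := by
  refine Primrec.list_flatMap (Primrec.list_range.comp (Primrec.list_length.comp
    (Primrec.snd.comp Primrec.snd))) ?_
  refine Primrec.list_map (Primrec.const _) ?_
  refine Primrec.pair (Primrec.pair (Primrec.encode.comp (Primrec.pair ?_ ?_))
    (Primrec.const _)) ?_
  · exact Primrec.fst.comp (Primrec.fst.comp Primrec.fst)
  · refine Primrec.sumInl.comp (Primrec.pair (Primrec.list_cons.comp Primrec.snd ?_) ?_)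
    · exact Primrec.fst.comp (Primrec.snd.comp (Primrec.fst.comp Primrec.fst))
    · exact Primrec.snd.comp Primrec.fst
  · refine Primrec.fin_app.comp ?_ Primrec.snd
    refine (Primrec.list_getD _).comp ?_ (Primrec.snd.comp Primrec.fst)
    exact Primrec.snd.comp (Primrec.snd.comp (Primrec.fst.comp Primrec.fst))

theorem matches_orbPat (i0 : Fin M) (J : ℕ) (w : List (Fin M)) (e : List (Fin m))
    (wd : List (Fin m → Bool)) (y : ℕ → Fin M → Bool) :
    Matches y (orbPat i0 J (w, e, wd)) ↔ ExtendsWord (fun n i =>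
      y (encode ((w, Sum.inl (i :: e, n)) : List (Fin M) × QI m J)) i0) wd := by
  simp only [Matches, orbPat, List.mem_flatMap, List.mem_range, List.mem_map, List.mem_finRange,
    true_and]
  constructor
  · rintro h ⟨n, hn⟩
    funext i
    have := h _ ⟨n, hn, i, rfl⟩
    simpa [hn] using this
  · rintro h _ ⟨n, hn, i, rfl⟩
    have := congrFun (h ⟨n, hn⟩) i
    simpa [hn] using this

theorem effClosed_actY {s : Fin M → G} {sec : G → List (Fin M)}
    (hsec : ∀ g, ((sec g).map s).prod = g) {i0 : Fin M} (hi0 : s i0 = 1)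
    {rel : Fin R → List (Fin M)} (hrel : ∀ r, ((rel r).map s).prod = 1)
    (hF : ∀ F : List (Fin M) → Prop, (∀ r u v, F (u ++ rel r ++ v) ↔ F (u ++ v)) →
        ∀ w w', (w.map s).prod = (w'.map s).prod → (F w ↔ F w'))
    {s' : Fin m → H} {act : H → (ℕ → Bool) → ℕ → Bool}
    {X : Set (ℕ → Bool)} (hX : IsEffClosedActionWith s' act X)
    (aw bw : Fin J → List (Fin m)) (tw : Fin J → List (Fin M)) :
    IsEffClosedAction (actY m J s sec) (emb s '' YC s s' act X aw bw tw) := by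
  obtain ⟨-, ⟨hA1, hA2, hA3⟩, ⟨j0, hj0⟩, -, hSR⟩ := hX
  let I := List (Fin M) × QI m J
  let E : I → ℕ × Fin M := fun a => (encode a, i0)
  have hE : Primrec E := Primrec.encode.pair (Primrec.const i0)
  -- the families of constraints
  let C0 : Set (ℕ → Fin M → Bool) := {y | ∀ k : ℕ × Fin M, (decode k.1 : Option I) = none →
    ¬ Matches y [(k, true)]}
  let b1 : ℕ × Fin M → ℕ × Fin M := fun k =>
    ((decode k.1 : Option I).map fun p => E (sec (s k.2)⁻¹ ++ p.1, p.2)).getD k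
  let C1 : Set (ℕ → Fin M → Bool) := {y | ∀ k : ℕ × Fin M,
    y k.1 k.2 = y (b1 k).1 (b1 k).2}
  let C2 : Set (ℕ → Fin M → Bool) := {y | ∀ k : Fin R × List (Fin M) × List (Fin M) × QI m J,
    y (E (k.2.1 ++ rel k.1 ++ k.2.2.1, k.2.2.2)).1 (E (k.2.1 ++ rel k.1 ++ k.2.2.1, k.2.2.2)).2
      = y (E (k.2.1 ++ k.2.2.1, k.2.2.2)).1 (E (k.2.1 ++ k.2.2.1, k.2.2.2)).2}
  let C3 : Set (ℕ → Fin M → Bool) := {y | ∀ k : List (Fin M) × List (Fin m) × ℕ,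
    y (E (k.1, Sum.inl (j0 :: k.2.1, k.2.2))).1 (E (k.1, Sum.inl (j0 :: k.2.1, k.2.2))).2
      = y (E (k.1, Sum.inl (k.2.1, k.2.2))).1 (E (k.1, Sum.inl (k.2.1, k.2.2))).2}
  let C4 : Set (ℕ → Fin M → Bool) := {y |
    ∀ k : List (Fin M) × List (Fin m) × List (Fin m → Bool),
    (∀ x, ExtendsWord x k.2.2 → x ∉ SetRep s' act X) → ¬ Matches y (orbPat i0 J k)}
  let C5 : Set (ℕ → Fin M → Bool) := {y | ∀ k : List (Fin M) × Fin J × ℕ,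
    Matches y [(E (k.1, Sum.inr k.2.1), true)] →
    y (E (k.1, Sum.inl (aw k.2.1, k.2.2))).1 (E (k.1, Sum.inl (aw k.2.1, k.2.2))).2
      = y (E (k.1 ++ tw k.2.1, Sum.inl (bw k.2.1, k.2.2))).1
        (E (k.1 ++ tw k.2.1, Sum.inl (bw k.2.1, k.2.2))).2}
  have e0 : EC C0 := by
    refine EC.family (Sig.of_prim ?_) ?_
    · exact Primrec.eq.comp (Primrec.decode.comp Primrec.fst) (Primrec.const none)
    · exact Primrec.list_cons.comp (Primrec.id.pair (Primrec.const true)) (Primrec.const [])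
  have e1 : EC C1 := by
    refine EC.eqs Primrec.id ?_
    refine Primrec.option_getD.comp (Primrec.option_map (Primrec.decode.comp Primrec.fst) ?_)
      Primrec.id
    refine hE.comp (Primrec.pair (Primrec.list_append.comp ?_ ?_) ?_)
    · exact (Primrec.dom_finite fun i : Fin M => sec (s i)⁻¹).comp
        (Primrec.snd.comp Primrec.fst)
    · exact Primrec.fst.comp Primrec.snd
    · exact Primrec.snd.comp Primrec.snd
  have e2 : EC C2 := by
    have p1 : Primrec fun k : Fin R × List (Fin M) × List (Fin M) × QI m J => k.2.1 :=
      Primrec.fst.comp Primrec.snd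
    have p2 : Primrec fun k : Fin R × List (Fin M) × List (Fin M) × QI m J => k.2.2.1 :=
      Primrec.fst.comp (Primrec.snd.comp Primrec.snd)
    have p3 : Primrec fun k : Fin R × List (Fin M) × List (Fin M) × QI m J => k.2.2.2 :=
      Primrec.snd.comp (Primrec.snd.comp Primrec.snd)
    have p0 : Primrec fun k : Fin R × List (Fin M) × List (Fin M) × QI m J => rel k.1 :=
      (Primrec.dom_finite rel).comp Primrec.fst
    exact EC.eqs
      (hE.comp ((Primrec.list_append.comp (Primrec.list_append.comp p1 p0) p2).pair p3))
      (hE.comp ((Primrec.list_append.comp p1 p2).pair p3))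
  have e3 : EC C3 := by
    have p1 : Primrec fun k : List (Fin M) × List (Fin m) × ℕ => k.2.1 :=
      Primrec.fst.comp Primrec.snd
    have p2 : Primrec fun k : List (Fin M) × List (Fin m) × ℕ => k.2.2 :=
      Primrec.snd.comp Primrec.snd
    exact EC.eqs
      (hE.comp (Primrec.fst.pair (Primrec.sumInl.comp
        ((Primrec.list_cons.comp (Primrec.const j0) p1).pair p2))))
      (hE.comp (Primrec.fst.pair (Primrec.sumInl.comp (p1.pair p2))))
  have e4 : EC C4 := by
    refine EC.family ?_ (primrec_orbPat i0 J)
    exact (Sig.of_RE hSR.2).comp (Primrec.snd.comp Primrec.snd)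
  have e5 : EC C5 := by
    have p1 : Primrec fun k : List (Fin M) × Fin J × ℕ => k.2.1 :=
      Primrec.fst.comp Primrec.snd
    have p2 : Primrec fun k : List (Fin M) × Fin J × ℕ => k.2.2 :=
      Primrec.snd.comp Primrec.snd
    refine EC.condEq ?_ ?_ ?_
    · exact Primrec.list_cons.comp ((hE.comp (Primrec.fst.pair
        (Primrec.sumInr.comp p1))).pair (Primrec.const true)) (Primrec.const [])
    · exact hE.comp (Primrec.fst.pair (Primrec.sumInl.comp
        (((Primrec.dom_finite aw).comp p1).pair p2)))
    · exact hE.comp ((Primrec.list_append.comp Primrec.fst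
        ((Primrec.dom_finite tw).comp p1)).pair (Primrec.sumInl.comp
        (((Primrec.dom_finite bw).comp p1).pair p2)))
  have hEC := ((((e0.inter e1).inter e2).inter e3).inter e4).inter e5
  have hSet : SetRep s (actY m J s sec) (emb s '' YC s s' act X aw bw tw) =
      ((((C0 ∩ C1) ∩ C2) ∩ C3) ∩ C4) ∩ C5 := by
    ext y
    constructor
    · rintro ⟨_, ⟨c, hc, rfl⟩, hy⟩
      have hy' : ∀ n i, y n i = emb s (shift (s i) c) n := by
        intro n i
        have := congrFun (hy i) n
        rwa [actY, unemb_emb hsec] at this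
      have hyE : ∀ w q, y (E (w, q)).1 (E (w, q)).2 = c (w.map s).prod q := by
        intro w q
        rw [hy', emb_encode, hi0, shift_one]
      refine ⟨⟨⟨⟨⟨?_, ?_⟩, ?_⟩, ?_⟩, ?_⟩, ?_⟩
      · rintro ⟨n, i⟩ hk hm
        have h1 := hm _ List.mem_cons_self
        have h2 : (decode n : Option (List (Fin M) × QI m J)) = none := hk
        rw [hy'] at h1
        simp [emb, h2] at h1
      · rintro ⟨n, i⟩
        show y n i = y (b1 (n, i)).1 (b1 (n, i)).2
        cases hk : (decode n : Option (List (Fin M) × QI m J)) with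
        | none =>
          have : b1 (n, i) = (n, i) := by simp only [b1, I, hk]; rfl
          rw [this]
        | some p =>
          have : b1 (n, i) = E (sec (s i)⁻¹ ++ p.1, p.2) := by simp only [b1, I, hk]; rfl
          rw [this, hyE, hy']
          simp [emb, hk, shift, hsec]
      · rintro ⟨r, u, v, q⟩
        simp only [hyE]
        simp [hrel]
      · rintro ⟨w, e, n⟩
        simp only [hyE]
        obtain ⟨x, hx, hxe⟩ := hc.1 (w.map s).prod
        rw [hxe, hxe]
        simp [hj0]
      · rintro ⟨w, e, wd⟩ hbad
        rw [matches_orbPat]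
        intro hext
        refine hbad _ hext ?_
        obtain ⟨x, hx, hxe⟩ := hc.1 (w.map s).prod
        refine ⟨act (e.map s').prod x, hA1 _ hx, ?_⟩
        intro i
        funext n
        refine (hyE w (Sum.inl (i :: e, n))).trans ?_
        rw [hxe, List.map_cons, List.prod_cons, hA3 _ _ _ hx]
      · rintro ⟨w, j, n⟩ hm
        have h1 := hm _ List.mem_cons_self
        simp only [hyE] at h1 ⊢
        rw [hc.2 _ j h1 n]
        simp
    · rintro ⟨⟨⟨⟨⟨h0, h1⟩, h2⟩, h3⟩, h4⟩, h5⟩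
      let c : G → QI m J → Bool := fun g q => y (encode (sec g, q)) i0
      have hyc : ∀ w q, y (E (w, q)).1 (E (w, q)).2 = c (w.map s).prod q := by
        intro w q
        have := hF (fun w' => y (E (w, q)).1 (E (w, q)).2 = y (E (w', q)).1 (E (w', q)).2) (by
          intro r u v
          rw [h2 (r, u, v, q)]) w (sec (w.map s).prod) (hsec _).symm
        exact this.1 rfl
      have hc : c ∈ YC s s' act X aw bw tw := by
        have hstep : ∀ g (e : List (Fin m)), ∃ x ∈ X, (∀ n, c g (Sum.inl (e, n)) = x n) ∧
            ∀ i n, c g (Sum.inl (i :: e, n)) = act (s' i) x n := by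
          intro g e
          have hmem : (fun n i => c g (Sum.inl (i :: e, n))) ∈ SetRep s' act X := by
            rw [hSR.mem_iff]
            intro wd hwd hext
            exact h4 (sec g, e, wd) hwd ((matches_orbPat _ _ _ _ _ _).2 hext)
          obtain ⟨x, hx, hxi⟩ := hmem
          refine ⟨x, hx, ?_, ?_⟩
          · intro n
            have a1 := congrFun (hxi j0) n
            rw [hj0, hA2 x hx] at a1
            rw [← a1]
            exact (h3 (sec g, e, n)).symm
          · intro i n
            exact congrFun (hxi i) n
        refine ⟨?_, ?_⟩
        · intro g
          obtain ⟨x, hx, hx0, -⟩ := hstep g []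
          refine ⟨x, hx, ?_⟩
          intro e
          induction e with
          | nil =>
            intro n
            rw [hx0]
            simp [hA2 x hx]
          | cons i e ih =>
            intro n
            obtain ⟨x', hx', hx0', hi⟩ := hstep g e
            have : x' = act (e.map s').prod x := by
              funext n; rw [← hx0', ih]
            rw [hi, this, List.map_cons, List.prod_cons, hA3 _ _ _ hx]
        · intro g j hj n
          have := h5 (sec g, j, n) (by
            intro q hq
            rw [List.mem_singleton] at hq
            subst hq
            exact hj)
          simp only [hyc] at this
          simpa [hsec] using this
      refine ⟨emb s c, ⟨c, hc, rfl⟩, ?_⟩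
      intro i
      funext n
      rw [actY, unemb_emb hsec]
      cases hk : (decode n : Option (List (Fin M) × QI m J)) with
      | none =>
        simp only [emb, hk, Option.map_none, Option.getD_none]
        have := h0 (n, i) hk
        rw [← Bool.not_eq_true]
        intro ht
        refine this ?_
        intro q hq
        rw [List.mem_singleton] at hq
        subst hq
        exact ht
      | some p =>
        have e1 : b1 (n, i) = E (sec (s i)⁻¹ ++ p.1, p.2) := by simp only [b1, I, hk]; rfl
        have := h1 (n, i)
        simp only [e1, hyc] at this
        simp only [emb, hk, Option.map_some, Option.getD_some, shift]
        rw [this]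
        simp [hsec]
  have hEff : EffectivelyClosedSet (SetRep s (actY m J s sec)
      (emb s '' YC s s' act X aw bw tw)) := by
    rw [hSet]; exact hEC.effClosed
  refine ⟨M, s, ?_, actY_action hsec, ⟨i0, hi0⟩, closure_of_words fun g => ⟨_, hsec g⟩, hEff⟩
  have himg : emb s '' YC s s' act X aw bw tw = (fun (y : ℕ → Fin M → Bool) n => y n i0) ''
      SetRep s (actY m J s sec) (emb s '' YC s s' act X aw bw tw) := by
    have hact := actY_action hsec (s' := s') (act := act) (X := X) (aw := aw) (bw := bw) (tw := tw)
    ext z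
    constructor
    · intro hz
      refine ⟨fun n i => actY m J s sec (s i) z n, ⟨z, hz, fun i => rfl⟩, ?_⟩
      funext n
      simp only [hi0]
      rw [hact.2.1 z hz]
    · rintro ⟨y, ⟨x, hx, hy⟩, rfl⟩
      have := hy i0
      rw [hi0, hact.2.1 x hx] at this
      simp only [this]
      exact hx
  rw [himg]
  refine (hEff.1.isCompact.image ?_).isClosed
  fun_prop
end coding
end SelfSim

namespace SelfSim
section topo
variable {G A : Type*} [TopologicalSpace A] [DiscreteTopology A]

theorem sep_finset {C U : Set (G → A)} (hC : IsCompact C) (hU : IsOpen U) (hCU : C ⊆ U) :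
    ∃ F : Finset G, ∀ x ∈ C, ∀ y : G → A, (∀ h ∈ F, y h = x h) → y ∈ U := by
  classical
  have h1 : ∀ x ∈ C, ∃ F : Finset G, ∀ y : G → A, (∀ h ∈ F, y h = x h) → y ∈ U := by
    intro x hx
    obtain ⟨I, u, hu, hIu⟩ := isOpen_pi_iff.1 hU x (hCU hx)
    refine ⟨I, fun y hy => hIu ?_⟩
    intro i hi
    rw [hy i hi]
    exact (hu i hi).2
  choose! F hF using h1
  obtain ⟨t, ht, hcov⟩ := hC.elim_nhds_subcover (fun x => {y | ∀ h ∈ F x, y h = x h}) (by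
    intro x hx
    have : {y : G → A | ∀ h ∈ F x, y h = x h} = Set.pi (F x : Set G) (fun h => {x h}) := by
      ext y; simp [Set.mem_pi]
    show {y : G → A | ∀ h ∈ F x, y h = x h} ∈ nhds x
    rw [this]
    exact set_pi_mem_nhds (F x).finite_toSet fun i _ => by simp)
  refine ⟨t.biUnion F, fun x hx y hy => ?_⟩
  obtain ⟨x', hx', hxx'⟩ := Set.mem_iUnion₂.1 (hcov hx)
  refine hF x' (ht x' hx') y fun h hh => ?_
  rw [hy h (Finset.mem_biUnion.2 ⟨x', hx', hh⟩)]
  exact hxx' h hh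

theorem locConst_of_dep {Y : Type*} {f : (G → A) → Y} (F : Finset G)
    (h : ∀ x y, (∀ a ∈ F, y a = x a) → f y = f x) : IsLocallyConstant f := by
  rw [IsLocallyConstant.iff_eventually_eq]
  intro x
  have : {y : G → A | ∀ h ∈ F, y h = x h} = Set.pi (F : Set G) (fun h => {x h}) := by
    ext y; simp [Set.mem_pi]
  have h2 : {y : G → A | ∀ h ∈ F, y h = x h} ∈ nhds x := by
    rw [this]
    exact set_pi_mem_nhds F.finite_toSet fun i _ => by simp
  filter_upwards [h2] with y hy using h x y hy

theorem extend_bool [Finite A] {Z : Set (G → A)} (hZ : IsClosed Z) {f : (G → A) → Bool}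
    (hf : ContinuousOn f Z) : ∃ f' : (G → A) → Bool, Continuous f' ∧ ∀ z ∈ Z, f' z = f z := by
  classical
  have hc : ∀ b, IsClosed (Z ∩ f ⁻¹' {b}) := fun b =>
    hf.preimage_isClosed_of_isClosed hZ (isClosed_discrete _)
  obtain ⟨F, hF⟩ := sep_finset (hc true).isCompact (hc false).isOpen_compl (by
    rintro x ⟨h1, h2⟩ ⟨h3, h4⟩
    simp_all)
  refine ⟨fun z => decide (∃ y ∈ Z ∩ f ⁻¹' {true}, ∀ a ∈ F, z a = y a), ?_, ?_⟩
  · refine (locConst_of_dep F ?_).continuous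
    intro x y hxy
    congr 1
    refine propext (exists_congr fun u => and_congr_right fun _ => ?_)
    exact forall₂_congr fun a ha => by rw [hxy a ha]
  · intro z hz
    cases h : f z with
    | true =>
      simp only [decide_eq_true_eq]
      exact ⟨z, ⟨hz, h⟩, fun _ _ => rfl⟩
    | false =>
      simp only [decide_eq_false_iff_not]
      rintro ⟨y, hy, hyz⟩
      exact hF y hy z hyz ⟨hz, h⟩

theorem extend_seq [Finite A] {Z : Set (G → A)} (hZ : IsClosed Z) {f : (G → A) → ℕ → Bool}
    (hf : ContinuousOn f Z) :
    ∃ f' : (G → A) → ℕ → Bool, Continuous f' ∧ ∀ z ∈ Z, f' z = f z := by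
  have : ∀ n, ∃ f' : (G → A) → Bool, Continuous f' ∧ ∀ z ∈ Z, f' z = f z n := fun n =>
    extend_bool hZ ((continuous_apply n).comp_continuousOn hf)
  choose f' hf' hfz using this
  exact ⟨fun z n => f' n z, continuous_pi hf', fun z hz => funext fun n => hfz n z hz⟩

theorem sft_of_locConst [Group G] [Finite A] {P : (G → A) → G → Prop}
    (hP : ∀ g x h, P (shift g x) (g * h) ↔ P x h) (h1 : IsLocallyConstant fun x => P x 1) :
    IsSFT {x | ∀ h, P x h} := by
  have ho : IsOpen {x | P x 1} := by simpa using h1.isOpen_fiber True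
  have hc : IsClosed {x | P x 1} := by
    rw [← isOpen_compl_iff]
    simpa [Set.compl_ofPred] using h1.isOpen_fiber False
  obtain ⟨F, hF⟩ := sep_finset hc.isCompact ho subset_rfl
  refine ⟨F, {p | ∃ x, P x 1 ∧ ∀ h : F, p h = x h}, fun x => ?_⟩
  have key : ∀ g, P x g ↔ P (shift g⁻¹ x) 1 := fun g => by
    rw [← hP g⁻¹ x g]; simp
  refine forall_congr' fun g => ?_
  rw [key]
  constructor
  · intro h
    exact ⟨_, h, fun a => by simp [shift]⟩
  · rintro ⟨y, hy, hxy⟩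
    refine hF y hy _ fun a ha => ?_
    have := hxy ⟨a, ha⟩
    simpa [shift] using this

theorem IsLocallyConstant.dep {X D Y : Type*} [TopologicalSpace X] {c : X → D} {F : X → D → Y}
    (hc : IsLocallyConstant c) (hF : ∀ d, IsLocallyConstant fun x => F x d) :
    IsLocallyConstant fun x => F x (c x) := by
  rw [IsLocallyConstant.iff_eventually_eq] at hc ⊢
  intro x
  filter_upwards [hc x, (IsLocallyConstant.iff_eventually_eq _).1 (hF (c x)) x] with y h1 h2
  rw [h1, h2]

theorem locConst_pi {X ι Y : Type*} [TopologicalSpace X] [Finite ι] {F : X → ι → Y}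
    (hF : ∀ i, IsLocallyConstant fun x => F x i) : IsLocallyConstant F := by
  rw [IsLocallyConstant.iff_eventually_eq]
  intro x
  have := (Filter.eventually_all (l := nhds x)).2 fun i =>
    (IsLocallyConstant.iff_eventually_eq _).1 (hF i) x
  filter_upwards [this] with y hy
  exact funext hy

theorem locConst_forall {X ι : Type*} [TopologicalSpace X] [Finite ι] {F : X → ι → Prop}
    (hF : ∀ i, IsLocallyConstant fun x => F x i) : IsLocallyConstant fun x => ∀ i, F x i :=
  (locConst_pi hF).comp fun p => ∀ i, p i

theorem locConst_exists {X ι : Type*} [TopologicalSpace X] [Finite ι] {F : X → ι → Prop}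
    (hF : ∀ i, IsLocallyConstant fun x => F x i) : IsLocallyConstant fun x => ∃ i, F x i :=
  (locConst_pi hF).comp fun p => ∃ i, p i

theorem locConst_apply (g : G) : IsLocallyConstant fun x : G → A => x g :=
  (IsLocallyConstant.of_discrete (id : A → A)).comp_continuous (continuous_apply g)
end topo

set_option linter.unusedSectionVars false
section tiles
variable {G H : Type*} [Group G] [Group H] {M m J R k N : ℕ} {K B T : Type*}

/-- The data carried by letters of the simulating alphabet. -/
structure Tiles (K B : Type*) (M k N : ℕ) where
  alive : Fin N → K → Prop
  lab : Fin N → K → Fin k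
  ptr : Fin N → K → Fin M → B × K
  sel : Fin N → B × K

variable (D : Tiles K B M k N) (β : B → H)

/-- One step along a pointer. -/
def step (x : H → Fin N) (v : H × K) (t : Fin M) : H × K :=
  (v.1 * β (D.ptr (x v.1) v.2 t).1, (D.ptr (x v.1) v.2 t).2)

/-- Following pointers along a word. -/
def walk (x : H → Fin N) (v : H × K) (w : List (Fin M)) : H × K := w.foldl (step D β x) v

/-- The label at a vertex. -/
def labv (x : H → Fin N) (v : H × K) : Fin k := D.lab (x v.1) v.2

/-- The label configuration over `G` read off from a vertex. -/
def zz (sec : G → List (Fin M)) (x : H → Fin N) (v : H × K) : G → Fin k :=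
  fun g => labv D x (walk D β x v (sec g))

/-- The vertex selected at `h`. -/
def vs (x : H → Fin N) (h : H) : H × K := (h * β (D.sel (x h)).1, (D.sel (x h)).2)

/-- A vertex is alive. -/
def alv (x : H → Fin N) (v : H × K) : Prop := D.alive (x v.1) v.2

/-- First local rule. -/
def Cond1 (sec : G → List (Fin M)) (rel : Fin R → List (Fin M)) (CG : (G → Fin k) → Prop)
    (x : H → Fin N) (h : H) : Prop :=
  ∀ κ, alv D x (h, κ) → (∀ t, alv D x (step D β x (h, κ) t)) ∧
    (∀ r, walk D β x (h, κ) (rel r) = (h, κ)) ∧ CG (zz D β sec x (h, κ))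

/-- Second local rule. -/
def Cond2 (sec : G → List (Fin M)) (τ : T → G) (s' : Fin m → H)
    (bit : B × T × Fin m × B → (G → Fin k) → Bool)
    (x : H → Fin N) (h : H) : Prop :=
  alv D x (vs D β x h) ∧ ∀ i, ∃ t : T,
    walk D β x (vs D β x h) (sec (τ t)) = vs D β x (h * s' i) ∧
    bit ((D.sel (x h)).1, t, i, (D.sel (x (h * s' i))).1) (zz D β sec x (vs D β x h)) = true

/-- Left translation of vertices. -/
def gm (g : H) (v : H × K) : H × K := (g * v.1, v.2)

theorem gm_inj (g : H) {v w : H × K} : gm g v = gm g w ↔ v = w := by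
  simp [gm, Prod.ext_iff]

theorem step_shift (g : H) (x : H → Fin N) (v : H × K) (t : Fin M) :
    step D β (shift g x) (gm g v) t = gm g (step D β x v t) := by
  simp [step, gm, shift, mul_assoc]

theorem walk_shift (g : H) (x : H → Fin N) (w : List (Fin M)) : ∀ (v : H × K),
    walk D β (shift g x) (gm g v) w = gm g (walk D β x v w) := by
  induction w with
  | nil => intro v; rfl
  | cons t w ih =>
    intro v
    have := ih (step D β x v t)
    simpa [walk, step_shift] using this

theorem labv_shift (g : H) (x : H → Fin N) (v : H × K) :
    labv D (shift g x) (gm g v) = labv D x v := by simp [labv, gm, shift]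

theorem alv_shift (g : H) (x : H → Fin N) (v : H × K) :
    alv D (shift g x) (gm g v) ↔ alv D x v := by simp [alv, gm, shift]

theorem zz_shift (sec : G → List (Fin M)) (g : H) (x : H → Fin N) (v : H × K) :
    zz D β sec (shift g x) (gm g v) = zz D β sec x v := by
  funext a; simp [zz, walk_shift, labv_shift]

theorem vs_shift (g : H) (x : H → Fin N) (h : H) :
    vs D β (shift g x) (g * h) = gm g (vs D β x h) := by
  simp [vs, gm, shift, mul_assoc]

theorem Cond1_shift (sec : G → List (Fin M)) (rel : Fin R → List (Fin M))
    (CG : (G → Fin k) → Prop) (g : H) (x : H → Fin N) (h : H) :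
    Cond1 D β sec rel CG (shift g x) (g * h) ↔ Cond1 D β sec rel CG x h := by
  refine forall_congr' fun κ => ?_
  have : ((g * h, κ) : H × K) = gm g (h, κ) := rfl
  simp only [this, alv_shift, step_shift, walk_shift, zz_shift, gm_inj]

theorem Cond2_shift (sec : G → List (Fin M)) (τ : T → G) (s' : Fin m → H)
    (bit : B × T × Fin m × B → (G → Fin k) → Bool) (g : H) (x : H → Fin N) (h : H) :
    Cond2 D β sec τ s' bit (shift g x) (g * h) ↔ Cond2 D β sec τ s' bit x h := by
  have : ∀ a, shift g x (g * a) = x a := by intro a; simp [shift]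
  simp only [Cond2, mul_assoc, vs_shift, alv_shift, walk_shift, zz_shift, gm_inj, this]

theorem lc_step (v : H × K) (t : Fin M) : IsLocallyConstant fun x : H → Fin N => step D β x v t :=
  (locConst_apply v.1).comp fun a => (v.1 * β (D.ptr a v.2 t).1, (D.ptr a v.2 t).2)

theorem lc_walk (w : List (Fin M)) : ∀ (v : H × K),
    IsLocallyConstant fun x : H → Fin N => walk D β x v w := by
  induction w with
  | nil => intro v; exact IsLocallyConstant.const v
  | cons t w ih =>
    intro v
    exact IsLocallyConstant.dep (F := fun x d => walk D β x d w) (lc_step D β v t) ih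

theorem lc_labv (v : H × K) : IsLocallyConstant fun x : H → Fin N => labv D x v :=
  (locConst_apply v.1).comp fun a => D.lab a v.2

theorem lc_alv (v : H × K) : IsLocallyConstant fun x : H → Fin N => alv D x v :=
  (locConst_apply v.1).comp fun a => D.alive a v.2

theorem lc_vs (h : H) : IsLocallyConstant fun x : H → Fin N => vs D β x h :=
  (locConst_apply h).comp fun a => (h * β (D.sel a).1, (D.sel a).2)

theorem cont_zz (sec : G → List (Fin M)) (v : H × K) :
    Continuous fun x : H → Fin N => zz D β sec x v := by
  refine continuous_pi fun g => IsLocallyConstant.continuous ?_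
  exact IsLocallyConstant.dep (F := fun x d => labv D x d) (lc_walk D β (sec g) v) (lc_labv D)

theorem lc_zz_comp {Y : Type*} (sec : G → List (Fin M)) {f : (G → Fin k) → Y}
    (hf : IsLocallyConstant f) (v : H × K) :
    IsLocallyConstant fun x : H → Fin N => f (zz D β sec x v) :=
  hf.comp_continuous (cont_zz D β sec v)

theorem lc_Cond1 [Finite K] (sec : G → List (Fin M)) (rel : Fin R → List (Fin M))
    {CG : (G → Fin k) → Prop} (hCG : IsLocallyConstant CG) (h : H) :
    IsLocallyConstant fun x : H → Fin N => Cond1 D β sec rel CG x h := by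
  refine locConst_forall fun κ => ?_
  refine (lc_alv D (h, κ)).comp₂ ?_ (fun p q => p → q)
  refine IsLocallyConstant.comp₂ (locConst_forall fun t => ?_) ?_ And
  · exact IsLocallyConstant.dep (F := fun x d => alv D x d) (lc_step D β (h, κ) t) (lc_alv D)
  refine IsLocallyConstant.comp₂ (locConst_forall fun r => ?_) ?_ And
  · exact (lc_walk D β (rel r) (h, κ)).comp fun a => a = (h, κ)
  · exact lc_zz_comp D β sec hCG (h, κ)

theorem lc_Cond2 [Finite T] (sec : G → List (Fin M)) (τ : T → G) (s' : Fin m → H)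
    {bit : B × T × Fin m × B → (G → Fin k) → Bool} (hbit : ∀ j, IsLocallyConstant (bit j)) (h : H) :
    IsLocallyConstant fun x : H → Fin N => Cond2 D β sec τ s' bit x h := by
  refine IsLocallyConstant.comp₂ ?_ (locConst_forall fun i => locConst_exists fun t => ?_) And
  · exact IsLocallyConstant.dep (F := fun x d => alv D x d) (lc_vs D β h) (lc_alv D)
  refine IsLocallyConstant.comp₂ ?_ ?_ And
  · refine IsLocallyConstant.comp₂ ?_ (lc_vs D β (h * s' i)) Eq
    exact IsLocallyConstant.dep (F := fun x d => walk D β x d (sec (τ t))) (lc_vs D β h)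
      (lc_walk D β _)
  · have hj : IsLocallyConstant fun x : H → Fin N =>
        (((D.sel (x h)).1, t, i, (D.sel (x (h * s' i))).1) : B × T × Fin m × B) :=
      (locConst_apply h).comp₂ (locConst_apply (h * s' i))
        fun a b => ((D.sel a).1, t, i, (D.sel b).1)
    refine IsLocallyConstant.dep (F := fun x d => bit d (zz D β sec x (vs D β x h)) = true) hj ?_
    intro d
    refine IsLocallyConstant.dep (F := fun x v => bit d (zz D β sec x v) = true) (lc_vs D β h) ?_
    intro v
    exact (lc_zz_comp D β sec (hbit d) v).comp fun b => b = true

theorem walk_append (x : H → Fin N) (v : H × K) (u w : List (Fin M)) :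
    walk D β x v (u ++ w) = walk D β x (walk D β x v u) w := by simp [walk]

theorem alv_walk {sec : G → List (Fin M)} {rel : Fin R → List (Fin M)} {CG : (G → Fin k) → Prop}
    {x : H → Fin N} (hx : ∀ h, Cond1 D β sec rel CG x h) (w : List (Fin M)) :
    ∀ v, alv D x v → alv D x (walk D β x v w) := by
  induction w with
  | nil => intro v h; exact h
  | cons t w ih => intro v h; exact ih _ ((hx v.1 v.2 h).1 t)

theorem walk_eq {s : Fin M → G} {sec : G → List (Fin M)} {rel : Fin R → List (Fin M)}
    (hF : ∀ F : List (Fin M) → Prop, (∀ r u v, F (u ++ rel r ++ v) ↔ F (u ++ v)) →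
        ∀ w w', (w.map s).prod = (w'.map s).prod → (F w ↔ F w'))
    {CG : (G → Fin k) → Prop}
    {x : H → Fin N} (hx : ∀ h, Cond1 D β sec rel CG x h) {v : H × K} (hv : alv D x v)
    {w w' : List (Fin M)} (hw : (w.map s).prod = (w'.map s).prod) :
    walk D β x v w = walk D β x v w' := by
  refine (hF (fun u => walk D β x v w = walk D β x v u) ?_ w w' hw).1 rfl
  intro r u u'
  have h1 := alv_walk D β hx u v hv
  have h2 : walk D β x (walk D β x v u) (rel r) = walk D β x v u := (hx _ _ h1).2.1 r
  rw [walk_append, walk_append, walk_append D β x v u u']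
  rw [h2]

theorem zz_walk {s : Fin M → G} {sec : G → List (Fin M)}
    (hsec : ∀ g, ((sec g).map s).prod = g) {rel : Fin R → List (Fin M)}
    (hF : ∀ F : List (Fin M) → Prop, (∀ r u v, F (u ++ rel r ++ v) ↔ F (u ++ v)) →
        ∀ w w', (w.map s).prod = (w'.map s).prod → (F w ↔ F w'))
    {CG : (G → Fin k) → Prop}
    {x : H → Fin N} (hx : ∀ h, Cond1 D β sec rel CG x h) {v : H × K} (hv : alv D x v) (g : G) :
    zz D β sec x (walk D β x v (sec g)) = shift g⁻¹ (zz D β sec x v) := by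
  funext a
  simp only [zz, shift, inv_inv]
  rw [← walk_append, walk_eq D β hF hx hv (w' := sec (g * a)) (by simp [hsec])]

theorem zz_cond {s : Fin M → G} {sec : G → List (Fin M)}
    (hsec : ∀ g, ((sec g).map s).prod = g) {rel : Fin R → List (Fin M)}
    (hF : ∀ F : List (Fin M) → Prop, (∀ r u v, F (u ++ rel r ++ v) ↔ F (u ++ v)) →
        ∀ w w', (w.map s).prod = (w'.map s).prod → (F w ↔ F w'))
    {CG : (G → Fin k) → Prop}
    {x : H → Fin N} (hx : ∀ h, Cond1 D β sec rel CG x h) {v : H × K} (hv : alv D x v) (g : G) :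
    CG (shift g⁻¹ (zz D β sec x v)) := by
  rw [← zz_walk D β hsec hF hx hv g]
  exact (hx _ _ (alv_walk D β hx (sec g) v hv)).2.2

end tiles
end SelfSim

namespace SelfSim
open Encodable

theorem transfer {G H : Type*} [Group G] [Group H] (cq : Coarse G H)
    (hp : FinitelyPresentedGroup G) (hG : SelfSimulable G) : SelfSimulable H := by
  classical
  intro X act ⟨m, s', hX⟩
  obtain ⟨M, s, i0, R, rel, hi0, hw, hrel, hF⟩ := fp_data hp
  choose sec hsec using hw
  have hw' : ∀ g, ∃ w : List (Fin m), (w.map s').prod = g := exists_word hX.2.2.2.1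
  choose secH hsecH using hw'
  obtain ⟨hXc, ⟨hA1, hA2, hA3⟩, -, -, -⟩ := id hX
  -- finite sets
  let Bs : Set H := {1} ∪ (⋃ t : Fin M, Set.range fun g => (cq.f' g)⁻¹ * cq.f' (g * s t)) ∪
    (Set.range fun h => (cq.f' (cq.f h))⁻¹ * h)⁻¹
  let Ks : Set G := {1} ∪ Set.range fun g => (cq.f (cq.f' g))⁻¹ * g
  let Ts : Set G := ⋃ i : Fin m, Set.range fun h => (cq.f h)⁻¹ * cq.f (h * s' i)
  have hBs : Bs.Finite := ((Set.finite_singleton _).union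
    (Set.finite_iUnion fun t => cq.hf' (s t))).union cq.hf'f.inv
  have hKs : Ks.Finite := (Set.finite_singleton _).union cq.hff'
  have hTs : Ts.Finite := Set.finite_iUnion fun i => cq.hf (s' i)
  have : Finite Bs := hBs
  have : Finite Ks := hKs
  have : Finite Ts := hTs
  have hB1 : (1 : H) ∈ Bs := Or.inl (Or.inl rfl)
  have hBt : ∀ g t, (cq.f' g)⁻¹ * cq.f' (g * s t) ∈ Bs := fun g t =>
    Or.inl (Or.inr (Set.mem_iUnion.2 ⟨t, g, rfl⟩))
  have hBs' : ∀ h, h⁻¹ * cq.f' (cq.f h) ∈ Bs := fun h =>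
    Or.inr ⟨h, by simp⟩
  have hKg : ∀ g, (cq.f (cq.f' g))⁻¹ * g ∈ Ks := fun g => Or.inr ⟨g, rfl⟩
  have hTi : ∀ h i, (cq.f h)⁻¹ * cq.f (h * s' i) ∈ Ts := fun h i =>
    Set.mem_iUnion.2 ⟨i, h, rfl⟩
  -- index set of relation bits
  obtain ⟨J, ⟨eJ⟩⟩ := Finite.exists_equiv_fin (Bs × Ts × Fin m × Bs)
  let aw : Fin J → List (Fin m) := fun j => secH (eJ.symm j).1
  let bw : Fin J → List (Fin m) := fun j => (eJ.symm j).2.2.1 :: secH (eJ.symm j).2.2.2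
  let tw : Fin J → List (Fin M) := fun j => sec (eJ.symm j).2.1
  obtain ⟨k, Z, φ0, ⟨FG, L, hL⟩, hφ0c, hφ0m, hφ0s, hφ0e⟩ :=
    hG _ _ (effClosed_actY hsec hi0 hrel hF hX aw bw tw)
  let CG : (G → Fin k) → Prop := fun z => (fun h : FG => z h) ∈ L
  have hCG : IsLocallyConstant CG := by
    refine locConst_of_dep FG fun x y hxy => ?_
    have : (fun h : FG => y h) = fun h : FG => x h := funext fun h => hxy h h.2
    simp only [CG, this]
  have hZ : ∀ z, z ∈ Z ↔ ∀ g, CG (shift g⁻¹ z) := by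
    intro z
    rw [hL]
    simp [CG, shift]
  have hZinv : ∀ g, ∀ z ∈ Z, shift g z ∈ Z := by
    intro g z hz
    rw [hZ] at hz ⊢
    intro a
    rw [← shift_mul]
    have := hz (g⁻¹ * a)
    simpa using this
  have hZc : IsClosed Z := by
    have : Z = ⋂ g : G, (fun z : G → Fin k => shift g⁻¹ z) ⁻¹' {z | CG z} := by
      ext z; rw [hZ]; simp
    rw [this]
    refine isClosed_iInter fun g => IsClosed.preimage ?_ ?_
    · exact continuous_pi fun a => continuous_apply _
    · rw [← isOpen_compl_iff]
      simpa [Set.compl_ofPred] using hCG.isOpen_fiber False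
  obtain ⟨φ, hφc, hφφ⟩ := extend_seq hZc hφ0c
  have hφm : ∀ z ∈ Z, ∃ c ∈ YC s s' act X aw bw tw, ∀ g, φ (shift g z) = emb s (shift g c) := by
    intro z hz
    obtain ⟨c, hc, hcz⟩ := hφ0m hz
    refine ⟨c, hc, fun g => ?_⟩
    rw [hφφ _ (hZinv g z hz), hφ0e g z hz, ← hcz, actY, unemb_emb hsec]
  have hφs : ∀ c ∈ YC s s' act X aw bw tw, ∃ z ∈ Z, ∀ g, φ (shift g z) = emb s (shift g c) := by
    intro c hc
    obtain ⟨z, hz, hzc⟩ := hφ0s ⟨c, hc, rfl⟩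
    refine ⟨z, hz, fun g => ?_⟩
    rw [hφφ _ (hZinv g z hz), hφ0e g z hz, hzc, actY, unemb_emb hsec]
  clear_value CG
  clear hφ0c hφ0m hφ0s hφ0e hφφ
  -- the alphabet
  obtain ⟨N, ⟨eN⟩⟩ := Finite.exists_equiv_fin
    ((Ks → Prop × Fin k × (Fin M → Bs × Ks)) × (Bs × Ks))
  let D : Tiles Ks Bs M k N :=
    { alive := fun a κ => ((eN.symm a).1 κ).1
      lab := fun a κ => ((eN.symm a).1 κ).2.1
      ptr := fun a κ => ((eN.symm a).1 κ).2.2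
      sel := fun a => (eN.symm a).2 }
  let β : Bs → H := Subtype.val
  let τ : Ts → G := Subtype.val
  let bit : Bs × Ts × Fin m × Bs → (G → Fin k) → Bool := fun j z =>
    φ z (encode (([] : List (Fin M)), (Sum.inr (eJ j) : QI m J)))
  have hbit : ∀ j, IsLocallyConstant (bit j) := fun j =>
    (IsLocallyConstant.iff_continuous _).2 ((continuous_apply _).comp hφc)
  let ZH : Set (H → Fin N) := {x | ∀ h, Cond1 D β sec rel CG x h ∧ Cond2 D β sec τ s' bit x h}
  let Ψ : (H → Fin N) → H → ℕ → Bool := fun x h n =>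
    φ (zz D β sec x (vs D β x h))
      (encode (([] : List (Fin M)), (Sum.inl (secH (β (D.sel (x h)).1), n) : QI m J)))
  have hΨshift : ∀ g x h, Ψ (shift g x) (g * h) = Ψ x h := by
    intro g x h
    funext n
    have : shift g x (g * h) = x h := by simp [shift]
    simp only [Ψ, vs_shift, zz_shift, this]
  have sound : ∀ x ∈ ZH, ∀ h, Ψ x h ∈ X ∧ ∀ i, Ψ x h = act (s' i) (Ψ x (h * s' i)) := by
    intro x hx h
    have hx1 : ∀ h, Cond1 D β sec rel CG x h := fun h => (hx h).1
    obtain ⟨hal, hst⟩ := (hx h).2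
    have hzZ : zz D β sec x (vs D β x h) ∈ Z := (hZ _).2 fun g =>
      zz_cond D β hsec hF hx1 hal g
    obtain ⟨c, hc, hcz⟩ := hφm _ hzZ
    have hc0 : φ (zz D β sec x (vs D β x h)) = emb s c := by
      have := hcz 1; rwa [shift_one, shift_one] at this
    have hΨ1 : ∀ n, Ψ x h n = c 1 (Sum.inl (secH (β (D.sel (x h)).1), n)) := by
      intro n
      simp only [Ψ, hc0]
      rw [emb_encode]; simp
    refine ⟨?_, fun i => ?_⟩
    · obtain ⟨x1, hx1, hx1e⟩ := hc.1 1
      have : Ψ x h = act (β (D.sel (x h)).1) x1 := by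
        funext n; rw [hΨ1, hx1e, hsecH]
      rw [this]
      exact hA1 _ hx1
    · obtain ⟨t, hwt, hb⟩ := hst i
      obtain ⟨x2, hx2, hx2e⟩ := hc.1 (τ t)
      have hΨ2 : Ψ x (h * s' i) = act (β (D.sel (x (h * s' i))).1) x2 := by
        funext n
        simp only [Ψ]
        rw [← hwt, zz_walk D β hsec hF hx1 hal, hcz, emb_encode]
        simp only [shift, List.map_nil, List.prod_nil, mul_one, inv_inv]
        rw [hx2e, hsecH]
      have hb' : c 1 (Sum.inr (eJ ((D.sel (x h)).1, t, i, (D.sel (x (h * s' i))).1))) = true := by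
        simp only [bit] at hb
        rw [hc0, emb_encode] at hb
        simpa using hb
      funext n
      have := hc.2 1 _ hb' n
      simp only [aw, bw, tw, Equiv.symm_apply_apply, hsec, one_mul] at this
      rw [hΨ1, this, hΨ2]
      rw [show ((t : Ts) : G) = τ t from rfl, hx2e, List.map_cons, List.prod_cons, hsecH,
        hA3 _ _ _ hx2]
  have sound2 : ∀ x ∈ ZH, ∀ (w : List (Fin m)) h,
      Ψ x h = act (w.map s').prod (Ψ x (h * (w.map s').prod)) := by
    intro x hx w
    induction w with
    | nil => intro h; simp [hA2 _ (sound x hx h).1]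
    | cons i w ih =>
      intro h
      rw [(sound x hx h).2 i, ih (h * s' i), List.map_cons, List.prod_cons,
        hA3 _ _ _ (sound x hx _).1, mul_assoc]
  refine ⟨N, ZH, fun x => Ψ x 1, ?_, ?_, ?_, ?_, ?_⟩
  · refine sft_of_locConst (P := fun x h => Cond1 D β sec rel CG x h ∧ Cond2 D β sec τ s' bit x h)
      ?_ ?_
    · intro g x h
      rw [Cond1_shift, Cond2_shift]
    · exact IsLocallyConstant.comp₂ (lc_Cond1 D β sec rel hCG 1) (lc_Cond2 D β sec τ s' hbit 1) And
  · refine Continuous.continuousOn (continuous_pi fun n => IsLocallyConstant.continuous ?_)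
    refine IsLocallyConstant.dep (F := fun x (b : Bs × Ks) =>
      φ (zz D β sec x (vs D β x 1))
      (encode (([] : List (Fin M)), (Sum.inl (secH (β b.1), n) : QI m J))))
      ((locConst_apply 1).comp D.sel) fun b => ?_
    refine IsLocallyConstant.dep (F := fun x v => φ (zz D β sec x v)
      (encode (([] : List (Fin M)), (Sum.inl (secH (β b.1), n) : QI m J)))) (lc_vs D β 1) fun v => ?_
    exact (IsLocallyConstant.iff_continuous _).2
      ((continuous_apply _).comp (hφc.comp (cont_zz D β sec v)))
  · intro x hx; exact (sound x hx 1).1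
  · -- surjectivity
    intro x0 hx0
    let c0 : G → QI m J → Bool := fun g q => match q with
      | Sum.inl (e, n) => act (e.map s').prod (act (cq.f' g)⁻¹ x0) n
      | Sum.inr j => decide (∀ n, act ((aw j).map s').prod (act (cq.f' g)⁻¹ x0) n =
          act ((bw j).map s').prod (act (cq.f' (g * ((tw j).map s).prod))⁻¹ x0) n)
    have hc0 : c0 ∈ YC s s' act X aw bw tw := by
      refine ⟨fun g => ⟨act (cq.f' g)⁻¹ x0, hA1 _ hx0, fun e n => rfl⟩, fun g j hj n => ?_⟩
      exact (of_decide_eq_true hj) n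
    obtain ⟨z0, hz0, hz0c⟩ := hφs c0 hc0
    let σ : G → H × Ks := fun g => (cq.f' g, ⟨(cq.f (cq.f' g))⁻¹ * g, hKg g⟩)
    have hη : ∀ g, cq.f (σ g).1 * (σ g).2 = g := by intro g; simp [σ]
    let x : H → Fin N := fun h => eN
      (fun κ => ((h, κ) = σ (cq.f h * κ), z0 (cq.f h * κ), fun t =>
        (if hb : h⁻¹ * cq.f' (cq.f h * κ * s t) ∈ Bs then ⟨_, hb⟩ else ⟨1, hB1⟩,
          (σ (cq.f h * κ * s t)).2)),
       (⟨_, hBs' h⟩, (σ (cq.f h)).2))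
    have hstep : ∀ g t, step D β x (σ g) t = σ (g * s t) := by
      intro g t
      have h1 : (σ g).1⁻¹ * cq.f' (cq.f (σ g).1 * (σ g).2 * s t) ∈ Bs := by
        rw [hη]; exact hBt g t
      simp only [step, D, x, Equiv.symm_apply_apply, dif_pos h1, β]
      simp only [hη, mul_inv_cancel_left]
      rfl
    have hwalk : ∀ (w : List (Fin M)) g, walk D β x (σ g) w = σ (g * (w.map s).prod) := by
      intro w
      induction w with
      | nil => intro g; simp [walk]
      | cons t w ih =>
        intro g
        show walk D β x (step D β x (σ g) t) w = _
        rw [hstep, ih, List.map_cons, List.prod_cons, mul_assoc]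
    have hlab : ∀ g, labv D x (σ g) = z0 g := by
      intro g
      simp only [labv, D, x, Equiv.symm_apply_apply, hη]
    have hzz : ∀ g, zz D β sec x (σ g) = shift g⁻¹ z0 := by
      intro g
      funext a
      simp [zz, hwalk, hlab, hsec, shift]
    have halv : ∀ v, alv D x v ↔ v = σ (cq.f v.1 * v.2) := by
      intro v
      simp only [alv, D, x, Equiv.symm_apply_apply]
    have halvσ : ∀ g, alv D x (σ g) := by
      intro g; rw [halv, hη]
    have hvs : ∀ h, vs D β x h = σ (cq.f h) := by
      intro h
      simp only [vs, D, x, Equiv.symm_apply_apply, β, mul_inv_cancel_left]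
      rfl
    have hsel : ∀ h, β (D.sel (x h)).1 = h⁻¹ * cq.f' (cq.f h) := by
      intro h
      simp only [D, x, Equiv.symm_apply_apply, β]
    have hpt : ∀ h, act (h⁻¹ * cq.f' (cq.f h)) (act (cq.f' (cq.f h))⁻¹ x0) = act h⁻¹ x0 := by
      intro h
      rw [← hA3 _ _ _ hx0]; simp
    refine ⟨x, ?_, ?_⟩
    · intro h
      refine ⟨?_, ?_, ?_⟩
      · intro κ hκ
        rw [halv] at hκ
        rw [hκ]
        refine ⟨fun t => ?_, fun r => ?_, ?_⟩
        · rw [hstep]; exact halvσ _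
        · rw [hwalk, hrel, mul_one]
        · rw [hzz]; exact (hZ _).1 hz0 _
      · rw [hvs]; exact halvσ _
      · intro i
        refine ⟨⟨_, hTi h i⟩, ?_, ?_⟩
        · rw [hvs, hvs, hwalk, hsec]; simp [τ]
        · simp only [bit]
          rw [hvs, hzz, hz0c, emb_encode]
          simp only [shift, List.map_nil, List.prod_nil, mul_one, inv_inv, c0, aw, bw, tw,
            Equiv.symm_apply_apply, decide_eq_true_eq, hsec, hsecH, List.map_cons, List.prod_cons,
            mul_inv_cancel_left]
          intro n
          have e1 := hsel h
          have e2 := hsel (h * s' i)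
          simp only [β] at e1 e2
          rw [e1, e2, hpt, hA3 _ _ _ (hA1 _ hx0), hpt, ← hA3 _ _ _ hx0]
          simp
    · funext n
      simp only [Ψ]
      rw [hvs, hzz, hz0c, emb_encode]
      simp only [shift, List.map_nil, List.prod_nil, mul_one, inv_inv, c0, hsecH]
      rw [hsel, hpt]
      simp [hA2 _ hx0]
  · intro g x hx
    have h1 := hΨshift g x g⁻¹
    rw [mul_inv_cancel] at h1
    show Ψ (shift g x) 1 = act g (Ψ x 1)
    rw [h1, sound2 x hx (secH g) g⁻¹, hsecH, inv_mul_cancel]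

/-- Self-simulability is invariant under quasi-isometry of finitely presented
groups. -/
theorem selfSimulable_iff_of_quasiIsometric
    (G₁ G₂ : Type*) [Group G₁] [Group G₂]
    (hp₁ : FinitelyPresentedGroup G₁) (hp₂ : FinitelyPresentedGroup G₂)
    (hqi : QuasiIsometric G₁ G₂) :
    SelfSimulable G₁ ↔ SelfSimulable G₂ := by
  obtain ⟨c⟩ := coarse_of_qi hqi
  exact ⟨transfer c hp₁, transfer c.symm hp₂⟩
end SelfSim
end
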